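/- arXiv:2401.06784 — 3 statements merged into one kernel-verified Lean document; each statement's English description precedes it below -/
import Mathlib

section
/- Let (p,q) be admissible. If the curve EF1: y² = x³ + (p²+q²)²x² + 4p²q²(p²−q²)²x has only finitely many rational points, then there is no Euler brick (a,b,c) with a·2pq = b·(p²−q²), i.e. no Euler brick has a face with aspect ratio (p²−q²):2pq. -/
/-!
Put `A = p² - q²`, `B = 2pq`; these are coprime, `A` is odd and `A² + B²` is a square. The curve EF1 is
`y² = x (x + A²) (x + B²)`, and a brick `(kA, kB, c)` gives on it a rational point with
`x = (c/k)² ≠ 0`. If the group of rational points is finite, this leads to a contradiction in two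
stages.

*A nonzero point of odd order exists* (`exists_oddTorsion`). On the points with `x` a nonzero square,
doubling stays inside: the double again has square `x`, and `x = 0` there would force `A B`, hence `A`
and `B`, to be squares, against Fermat's theorem on `a⁴ + b⁴ = c²` (`square_double`). So the order of
the point of the brick is not a power of two, and some multiple is nonzero of odd order.

*No nonzero point of odd order exists* (`no_oddTorsion`). A point `U` of odd order is a double, so
`x`, `x + A²`, `x + B²` are squares at `U`. Among these points one whose `√x` has the largest
denominator `w` is taken; then `2U`, `4U`, and `3U` if nonzero, have the same denominator
(`Roots.step`, `Lvl.three`). Let `(t, r, s)/w` be the three roots at a double and `(a, b, c)/w` those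
at the point itself. The duplication formula reads `(t + r)(t + s) = a²`, `(t + r)(r + s) = b²`,
`(t + s)(r + s) = c²`, and equality of the denominators makes `t + r`, `t + s`, `r + s` free of common
primes, hence squares `m²`, `n²`, `l²`. Using this twice in a row, `m = μ²` and `n = 2ν²`, so that
`√x = 2(μν)²/w` and `±y` is `w` times a rational square (`Step.shape`).

If `3U = 0`, the roots at `U` and `2U` agree, so `l = m + n`, and `μ² + ν²`, `μ² + 4ν²` are both squares,
which is impossible (`no_concordant`). If `3U ≠ 0`, the formula
`x(3U) - x(U) = -4 y(U) y(2U) / (x(2U) - x(U))²` shows that `(μ₃ν₃)⁴ - (μν)⁴` is up to sign a nonzero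
square, which is impossible as well (`no_sub_fourth_eq_sq`).
-/

/-- The elliptic curve EF1: `y² = x³ + (p²+q²)²x² + 4p²q²(p²−q²)²x`, as a set of
rational points. -/
def EF1 (p q : ℤ) : Set (ℚ × ℚ) :=
  {P | P.2 ^ 2 = P.1 ^ 3 + ((p : ℚ) ^ 2 + (q : ℚ) ^ 2) ^ 2 * P.1 ^ 2 +
    4 * (p : ℚ) ^ 2 * (q : ℚ) ^ 2 * ((p : ℚ) ^ 2 - (q : ℚ) ^ 2) ^ 2 * P.1}

/-! ### Two descents -/

/-- `x⁴ - y⁴ = z²` has no solution with `y z ≠ 0`: Fermat's descent on `n = |x|`, through the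
parametrization of the primitive Pythagorean triple `(y², z, x²)`. -/
lemma no_sub_fourth_eq_sq (n : ℕ) : ∀ x y z : ℤ, x.natAbs = n → y ≠ 0 → z ≠ 0 →
    x ^ 4 - y ^ 4 = z ^ 2 → False := by
  induction n using Nat.strong_induction_on with
  | _ n ih =>
  intro x y z hn hy hz h
  have hx : x ≠ 0 := by
    rintro rfl
    have : 0 < y ^ 4 := by positivity
    nlinarith [sq_nonneg z]
  by_cases hd : Int.gcd x y = 1
  swap
  · obtain ⟨x', hx'⟩ := Int.gcd_dvd_left x y
    obtain ⟨y', hy'⟩ := Int.gcd_dvd_right x y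
    set d := Int.gcd x y with hdd
    have hd0 : (d : ℤ) ≠ 0 := by
      rintro h0
      rw [h0] at hx'
      simp at hx'
      exact hx hx'
    have hz' : ((d : ℤ) ^ 2) ^ 2 ∣ z ^ 2 := ⟨x' ^ 4 - y' ^ 4, by
      rw [← h, hx', hy']; ring⟩
    rw [Int.pow_dvd_pow_iff (by norm_num)] at hz'
    obtain ⟨z', hz'⟩ := hz'
    refine ih x'.natAbs ?_ x' y' z' rfl ?_ ?_ ?_
    · rw [← hn, hx', Int.natAbs_mul, Int.natAbs_natCast]
      have h1 : 0 < x'.natAbs := by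
        rw [Int.natAbs_pos]; rintro rfl; simp at hx'; exact hx hx'
      have h2 : d ≠ 0 := by exact_mod_cast hd0
      have : 2 ≤ d := by omega
      nlinarith
    · rintro rfl; simp at hy'; exact hy hy'
    · rintro rfl; simp at hz'; exact hz hz'
    · have : (d : ℤ) ^ 4 * (x' ^ 4 - y' ^ 4) = (d : ℤ) ^ 4 * z' ^ 2 := by
        rw [hx', hy', hz'] at h; linear_combination h
      exact mul_left_cancel₀ (pow_ne_zero 4 hd0) this
  have hc : IsCoprime x y := Int.isCoprime_iff_gcd_eq_one.mpr hd
  have hcz : IsCoprime (y ^ 2) z := by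
    have h1 : IsCoprime (x ^ 4) (y ^ 4) := hc.pow
    have h2 : IsCoprime (z ^ 2) (y ^ 4) := by
      have : z ^ 2 = x ^ 4 + y ^ 4 * (-1) := by linear_combination -h
      rw [this]
      exact h1.add_mul_left_left _
    have h3 : IsCoprime (z ^ 2) (y ^ 2) := by
      rw [show y ^ 4 = y ^ 2 * y ^ 2 by ring] at h2
      exact h2.of_mul_right_left
    exact ((IsCoprime.pow_left_iff (by norm_num)).mp h3).symm
  have hpt : PythagoreanTriple (y ^ 2) z (x ^ 2) := by
    unfold PythagoreanTriple; linear_combination -h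
  have hx2 : 0 < x ^ 2 := by positivity
  rcases Int.emod_two_eq_zero_or_one y with hye | hyo
  · have hzo : z % 2 = 1 := by
      rcases Int.emod_two_eq_zero_or_one z with h0 | h0
      · exfalso
        have h1 : (2 : ℤ) ∣ y ^ 2 := dvd_pow (Int.dvd_of_emod_eq_zero hye) (by norm_num)
        have := hcz.isUnit_of_dvd' h1 (Int.dvd_of_emod_eq_zero h0)
        exact absurd this (by decide)
      · exact h0
    -- two parametrizations in a row; the second one yields a smaller solution `(P, Q, b)`
    have key : ∀ u v : ℤ, u % 2 = 0 → v % 2 = 1 → IsCoprime u v → y ^ 2 = 2 * u * v →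
        x ^ 2 = u ^ 2 + v ^ 2 → False := by
      intro u v hu hv huv h1 h2
      obtain ⟨u1, rfl⟩ := Int.dvd_of_emod_eq_zero hu
      obtain ⟨y1, rfl⟩ := Int.dvd_of_emod_eq_zero hye
      have h3 : u1 * v = y1 ^ 2 := by linarith
      have h4 : IsCoprime u1 v := huv.of_mul_left_right
      obtain ⟨a, ha⟩ := Int.sq_of_isCoprime h4 h3
      obtain ⟨b, hb⟩ := Int.sq_of_isCoprime h4.symm (by rw [mul_comm]; exact h3)
      have hv2 : v ^ 2 = b ^ 4 := by rcases hb with h | h <;> rw [h] <;> ring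
      have hu2 : u1 ^ 2 = a ^ 4 := by rcases ha with h | h <;> rw [h] <;> ring
      have hbo : b ^ 2 % 2 = 1 := by
        rcases hb with h | h <;> omega
      have ha0 : a ≠ 0 := by 
        rintro rfl
        have hu0 : u1 = 0 := by simpa using ha
        rw [hu0, zero_mul] at h3
        have hy0 : y1 = 0 := pow_eq_zero_iff two_ne_zero |>.mp h3.symm
        exact hy (by simp [hy0])
      have hb0 : b ≠ 0 := by rintro rfl; simp at hbo
      have hab : IsCoprime (b ^ 2) (2 * a ^ 2) := by
        rcases hb with h | h <;> rcases ha with h' | h' <;> rw [h, h'] at huv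
        · exact huv.symm
        · have := huv.symm; rw [mul_neg, IsCoprime.neg_right_iff] at this; exact this
        · have := huv.symm; rw [IsCoprime.neg_left_iff] at this; exact this
        · have := huv.symm
          rw [IsCoprime.neg_left_iff, mul_neg, IsCoprime.neg_right_iff] at this; exact this
      have hpt2 : PythagoreanTriple (b ^ 2) (2 * a ^ 2) |x| := by
        unfold PythagoreanTriple
        rw [abs_mul_abs_self]; linear_combination -h2 - 4 * hu2 - hv2
      obtain ⟨p, q, hp, hq, hr, hpq, -, -⟩ := hpt2.coprime_classification'
        (Int.isCoprime_iff_gcd_eq_one.mp hab) hbo (abs_pos.mpr hx)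
      have h5 : p * q = a ^ 2 := by linarith
      obtain ⟨P, hP⟩ := Int.sq_of_gcd_eq_one hpq h5
      obtain ⟨Q, hQ⟩ := Int.sq_of_gcd_eq_one (by rw [Int.gcd_comm]; exact hpq)
        (by rw [mul_comm]; exact h5)
      have hp2 : p ^ 2 = P ^ 4 := by rcases hP with h | h <;> rw [h] <;> ring
      have hq2 : q ^ 2 = Q ^ 4 := by rcases hQ with h | h <;> rw [h] <;> ring
      have hq0 : q ≠ 0 := by
        rintro rfl
        rw [mul_zero] at h5
        exact ha0 (pow_eq_zero_iff two_ne_zero |>.mp h5.symm)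
      have hQ0 : Q ≠ 0 := by rintro rfl; simp at hQ; exact hq0 hQ
      refine ih P.natAbs ?_ P Q b rfl hQ0 hb0 (by rw [hp, hp2, hq2])
      rw [← hn]
      zify
      rw [hr, hp2]
      have h6 : 0 < q ^ 2 := by positivity
      have h7 : |P| ≤ P ^ 4 := by
        have : P ^ 4 = |P| ^ 4 := by rw [Even.pow_abs (by decide)]
        rw [this]
        rcases (abs_nonneg P).eq_or_lt with h0 | h0
        · rw [← h0]; norm_num
        · exact le_self_pow₀ h0 (by norm_num)
      linarith
    have hpt' : PythagoreanTriple z (y ^ 2) (x ^ 2) := hpt.symm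
    obtain ⟨u, v, h1, h2, h3, h4, h5, -⟩ := hpt'.coprime_classification'
      (Int.isCoprime_iff_gcd_eq_one.mp hcz.symm) hzo hx2
    rw [← Int.isCoprime_iff_gcd_eq_one] at h4
    rcases h5 with ⟨hu, hv⟩ | ⟨hu, hv⟩
    · exact key u v hu hv h4 h2 h3
    · exact key v u hv hu h4.symm (by rw [h2]; ring) (by rw [h3]; ring)
  · obtain ⟨u, v, h1, h2, h3, -⟩ := hpt.coprime_classification'
      (Int.isCoprime_iff_gcd_eq_one.mp hcz) (by rw [pow_two, Int.mul_emod, hyo]; rfl) hx2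
    have hv0 : v ≠ 0 := by rintro rfl; simp at h2; exact hz h2
    refine ih u.natAbs ?_ u v (x * y) rfl hv0 (mul_ne_zero hx hy) ?_
    · rw [← hn, Int.natAbs_lt_iff_sq_lt, h3]
      have : 0 < v ^ 2 := by positivity
      linarith
    · rw [mul_pow, h1, h3]; ring

/-- `x² + y²` and `x² + 4y²` are not both squares when `x y ≠ 0`, by descent on `n = |x y|`.
For `x` odd, comparing the parametrizations `y = a b` of `(x, 2y)` and `y = 2 c d` of `(x, y)` as legs
of primitive Pythagorean triples gives a smaller solution. -/
lemma no_concordant (n : ℕ) : ∀ x y h f : ℤ, (x * y).natAbs = n → x ≠ 0 → y ≠ 0 →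
    x ^ 2 + y ^ 2 = h ^ 2 → x ^ 2 + 4 * y ^ 2 = f ^ 2 → False := by
  induction n using Nat.strong_induction_on with
  | _ n ih =>
  intro x y h f hn hx hy hh hf
  by_cases hd : Int.gcd x y = 1
  swap
  · obtain ⟨x', hx'⟩ := Int.gcd_dvd_left x y
    obtain ⟨y', hy'⟩ := Int.gcd_dvd_right x y
    set d := Int.gcd x y with hdd
    have hd0 : (d : ℤ) ≠ 0 := by
      rintro h0
      rw [h0] at hx'
      simp at hx'
      exact hx hx'
    have hh' : (d : ℤ) ^ 2 ∣ h ^ 2 := ⟨x' ^ 2 + y' ^ 2, by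
      rw [← hh, hx', hy']; ring⟩
    have hf' : (d : ℤ) ^ 2 ∣ f ^ 2 := ⟨x' ^ 2 + 4 * y' ^ 2, by
      rw [← hf, hx', hy']; ring⟩
    rw [Int.pow_dvd_pow_iff (by norm_num)] at hh' hf'
    obtain ⟨h', rfl⟩ := hh'
    obtain ⟨f', rfl⟩ := hf'
    have hx0 : x' ≠ 0 := by rintro rfl; simp at hx'; exact hx hx'
    have hy0 : y' ≠ 0 := by rintro rfl; simp at hy'; exact hy hy'
    refine ih (x' * y').natAbs ?_ x' y' h' f' rfl hx0 hy0 ?_ ?_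
    · have h3 : ((d : ℤ) * d * (x' * y')).natAbs = d * d * (x' * y').natAbs := by
        rw [Int.natAbs_mul, Int.natAbs_mul, Int.natAbs_natCast]
      rw [← hn, hx', hy', show (d : ℤ) * x' * (d * y') = d * d * (x' * y') by ring, h3]
      have h1 : 0 < (x' * y').natAbs := Int.natAbs_pos.mpr (mul_ne_zero hx0 hy0)
      have h2 : d ≠ 0 := by exact_mod_cast hd0
      have : 2 ≤ d := by omega
      have h4 : 4 ≤ d * d := by nlinarith
      nlinarith
    · apply mul_left_cancel₀ (pow_ne_zero 2 hd0)
      rw [hx', hy'] at hh; linear_combination hh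
    · apply mul_left_cancel₀ (pow_ne_zero 2 hd0)
      rw [hx', hy'] at hf; linear_combination hf
  rcases Int.emod_two_eq_zero_or_one x with hxe | hxo
  · -- `x = 2 x₁` turns the pair `(x, y)` into the solution `(y, x₁)`.
    obtain ⟨x1, rfl⟩ := Int.dvd_of_emod_eq_zero hxe
    have hf2 : (2 : ℤ) ^ 2 ∣ f ^ 2 := ⟨x1 ^ 2 + y ^ 2, by rw [← hf]; ring⟩
    rw [Int.pow_dvd_pow_iff (by norm_num)] at hf2
    obtain ⟨f1, rfl⟩ := hf2
    have hx1 : x1 ≠ 0 := by rintro rfl; simp at hx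
    refine ih (y * x1).natAbs ?_ y x1 f1 h rfl hy hx1 (by linarith) (by linarith)
    rw [← hn, show 2 * x1 * y = 2 * (y * x1) by ring]
    have h1 : 0 < (y * x1).natAbs := Int.natAbs_pos.mpr (mul_ne_zero hy hx1)
    omega
  have hc : IsCoprime x y := Int.isCoprime_iff_gcd_eq_one.mpr hd
  have hc2 : IsCoprime x (2 * y) := by
    refine IsCoprime.mul_right ?_ hc
    rw [Int.isCoprime_iff_gcd_eq_one, Int.gcd_comm]
    rcases Nat.prime_two.coprime_iff_not_dvd with hh
    rw [Int.gcd_eq_natAbs]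
    refine hh.mpr ?_
    omega
  have hh0 : h ≠ 0 := by
    rintro rfl; have : 0 < x ^ 2 := by positivity
    nlinarith [sq_nonneg y]
  have hf0 : f ≠ 0 := by
    rintro rfl; have : 0 < x ^ 2 := by positivity
    nlinarith [sq_nonneg y]
  have t1 : PythagoreanTriple x (2 * y) |f| := by
    unfold PythagoreanTriple; rw [abs_mul_abs_self]; linear_combination hf
  have t2 : PythagoreanTriple x y |h| := by
    unfold PythagoreanTriple; rw [abs_mul_abs_self]; linear_combination hh
  obtain ⟨a, b, ha1, ha2, -, hab, -, -⟩ := t1.coprime_classification'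
    (Int.isCoprime_iff_gcd_eq_one.mp hc2) hxo (abs_pos.mpr hf0)
  obtain ⟨c, d, hc1, hc2', -, hcd, -, -⟩ := t2.coprime_classification'
    (Int.isCoprime_iff_gcd_eq_one.mp hc) hxo (abs_pos.mpr hh0)
  have hyab : y = a * b := by linarith
  -- The two factors of the identity differ from `X²` and `W²` by a factor `k` dividing 3;
  -- `k = 1` is impossible modulo 3, and `k = 3` makes `(X, W)` a smaller solution.
  have key : ∀ X W Y Z : ℤ, X ≠ 0 → W ≠ 0 → Z ≠ 0 → IsCoprime X W → IsCoprime Y Z →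
      X ^ 2 * (Y ^ 2 - Z ^ 2) = W ^ 2 * (4 * Z ^ 2 - Y ^ 2) → 2 * (X * W) ∣ y → False := by
    intro X W Y Z hX hW hZ hXW hYZ heq hdvd
    have hd1 : W ^ 2 ∣ Y ^ 2 - Z ^ 2 := by
      exact (hXW.symm.pow (m := 2) (n := 2)).dvd_of_dvd_mul_left ⟨_, heq⟩
    obtain ⟨k, hk⟩ := hd1
    have hk2 : 4 * Z ^ 2 - Y ^ 2 = X ^ 2 * k := by
      apply mul_left_cancel₀ (pow_ne_zero 2 hW)
      rw [← heq, hk]; ring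
    have e1 : k * (X ^ 2 + W ^ 2) = 3 * Z ^ 2 := by linear_combination -hk - hk2
    have e2 : k * (X ^ 2 + 4 * W ^ 2) = 3 * Y ^ 2 := by linear_combination -4 * hk - hk2
    have hk3 : k ∣ 3 := by
      obtain ⟨s, t, hst⟩ := (hYZ.pow (m := 2) (n := 2))
      have : (3 : ℤ) = s * (3 * Y ^ 2) + t * (3 * Z ^ 2) := by linear_combination -3 * hst
      rw [this, ← e1, ← e2]
      exact dvd_add (Dvd.dvd.mul_left (dvd_mul_right _ _) _)
        (Dvd.dvd.mul_left (dvd_mul_right _ _) _)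
    have hkpos : 0 < k := by
      have p1 : 0 < X ^ 2 + W ^ 2 := by positivity
      have p2 : 0 < 3 * Z ^ 2 := by positivity
      rw [← e1] at p2
      exact (mul_pos_iff_of_pos_right p1).mp p2
    have hkle : k ≤ 3 := Int.le_of_dvd (by norm_num) hk3
    have hk13 : k = 1 ∨ k = 3 := by
      have : k = 1 ∨ k = 2 ∨ k = 3 := by omega
      rcases this with h | h | h
      · exact Or.inl h
      · subst h; omega
      · exact Or.inr h
    rcases hk13 with rfl | rfl
    · have h3X : (3 : ℤ) ∣ X ^ 2 + W ^ 2 := ⟨Z ^ 2, by linarith⟩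
      have m1 : X % 3 = 0 ∧ W % 3 = 0 := by
        have := Int.emod_emod_of_dvd X (dvd_refl (3 : ℤ))
        have hx3 : X % 3 = 0 ∨ X % 3 = 1 ∨ X % 3 = 2 := by omega
        have hw3 : W % 3 = 0 ∨ W % 3 = 1 ∨ W % 3 = 2 := by omega
        have h0 := Int.emod_eq_zero_of_dvd h3X
        rcases hx3 with h | h | h <;> rcases hw3 with h' | h' | h' <;>
          simp [pow_two, Int.add_emod, Int.mul_emod, h, h'] at h0 ⊢
      have := hXW.isUnit_of_dvd' (Int.dvd_of_emod_eq_zero m1.1) (Int.dvd_of_emod_eq_zero m1.2)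
      exact absurd this (by decide)
    · obtain ⟨e, he⟩ := hdvd
      refine ih (X * W).natAbs ?_ X W Z Y rfl hX hW (by linarith) (by linarith)
      have q4 : ((X * W) * (2 * (x * e))).natAbs = (X * W).natAbs * (2 * (x * e)).natAbs :=
        Int.natAbs_mul _ _
      rw [← hn, he, show x * (2 * (X * W) * e) = (X * W) * (2 * (x * e)) by ring, q4]
      have he0 : e ≠ 0 := by rintro rfl; simp at he; exact hy he
      have q1 : 0 < (X * W).natAbs := Int.natAbs_pos.mpr (mul_ne_zero hX hW)
      have q2 : 0 < (x * e).natAbs := Int.natAbs_pos.mpr (mul_ne_zero hx he0)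
      have q3 : (2 * (x * e)).natAbs = 2 * (x * e).natAbs := by rw [Int.natAbs_mul]; rfl
      rw [q3]
      nlinarith
  have hc0 : c ≠ 0 := by rintro rfl; simp at hc2'; exact hy hc2'
  have hd0 : d ≠ 0 := by rintro rfl; simp at hc2'; exact hy hc2'
  have ha0 : a ≠ 0 := by rintro rfl; simp at hyab; exact hy hyab
  have hb0 : b ≠ 0 := by rintro rfl; simp at hyab; exact hy hyab
  -- `a b = 2 c d` is factored through `X = gcd (a, c)`.
  obtain ⟨Y, hY⟩ := Int.gcd_dvd_left a c
  obtain ⟨Z, hZ⟩ := Int.gcd_dvd_right a c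
  set X : ℤ := (Int.gcd a c : ℤ) with hXdef
  have hX0 : X ≠ 0 := by
    rintro h0; rw [h0] at hY; simp at hY; exact ha0 hY
  have hYZ : IsCoprime Y Z := by
    rw [Int.isCoprime_iff_gcd_eq_one]
    have h1 : Int.gcd a c = Int.gcd a c * Int.gcd Y Z := by
      conv_lhs => rw [hY, hZ, Int.gcd_mul_left]
      simp [hXdef]
    have h2 : 0 < Int.gcd a c := Int.gcd_pos_of_ne_zero_left _ ha0
    exact Nat.eq_of_mul_eq_mul_left h2 (by rw [← h1, mul_one])
  have hYb : Y * b = 2 * Z * d := by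
    apply mul_left_cancel₀ hX0
    have : a * b = 2 * c * d := by rw [← hyab, hc2']
    rw [hY, hZ] at this; linear_combination this
  have hZb : Z ∣ b := by
    refine hYZ.symm.dvd_of_dvd_mul_left ⟨2 * d, by rw [hYb]; ring⟩
  obtain ⟨e, he⟩ := hZb
  have hZ0 : Z ≠ 0 := by rintro rfl; simp at hZ; exact hc0 hZ
  have hY0 : Y ≠ 0 := by rintro rfl; simp at hY; exact ha0 hY
  have hYe : Y * e = 2 * d := by
    apply mul_left_cancel₀ hZ0
    rw [he] at hYb; linear_combination hYb
  have hsq : a ^ 2 - b ^ 2 = c ^ 2 - d ^ 2 := by rw [← ha1, hc1]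
  have habc : IsCoprime a b := Int.isCoprime_iff_gcd_eq_one.mpr hab
  have he0 : e ≠ 0 := by rintro rfl; simp at he; exact hb0 he
  rcases Int.emod_two_eq_zero_or_one Y with hYe' | hYo
  · obtain ⟨Y1, rfl⟩ := Int.dvd_of_emod_eq_zero hYe'
    have hd' : d = Y1 * e := by linarith
    refine key e X Z Y1 he0 hX0 ?_ ?_ ?_ ?_ ?_
    · rintro rfl; simp at hY0
    · rw [hY, he] at habc
      exact (habc.of_mul_left_left.of_mul_right_right).symm
    · exact hYZ.symm.of_mul_right_right
    · rw [hY, hZ, he, hd'] at hsq; linear_combination -hsq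
    · rw [hyab, hY, he]; exact ⟨Y1 * Z, by ring⟩
  · have he2 : (2 : ℤ) ∣ e := by
      have : (2 : ℤ) ∣ Y * e := ⟨d, hYe⟩
      rcases Int.prime_two.dvd_mul.mp this with h | h
      · omega
      · exact h
    obtain ⟨W, rfl⟩ := he2
    have hd' : d = Y * W := by linarith
    refine key X W Y Z hX0 ?_ hZ0 ?_ hYZ ?_ ?_
    · rintro rfl; simp at he0
    · rw [hY, he, show Z * (2 * W) = W * (2 * Z) by ring] at habc
      exact habc.of_mul_left_left.of_mul_right_left
    · rw [hY, hZ, he, hd'] at hsq; linear_combination hsq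
    · rw [hyab, hY, he]; exact ⟨Y * Z, by ring⟩

/-! ### Integral doubling steps -/

/-- `x · gcd (y, z) = gcd (u, v)²`, so `x` is a square if `x`, `y`, `z` have no common prime factor. -/
lemma sq_of_mul_gcd {x y z u v : ℤ} (hx : 0 < x) (hxy : x * y = u ^ 2) (hxz : x * z = v ^ 2)
    (hc : ∀ l : ℕ, l.Prime → (l : ℤ) ∣ x → (l : ℤ) ∣ y → (l : ℤ) ∣ z → False) :
    ∃ m : ℤ, 0 < m ∧ x = m ^ 2 := by
  have h1 : x * (Int.gcd y z : ℤ) = (Int.gcd u v : ℤ) ^ 2 := by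
    have h2 := Int.gcd_mul_left x y z
    rw [hxy, hxz, Int.pow_gcd_pow] at h2
    have h3 : ((x.natAbs * Int.gcd y z : ℕ) : ℤ) = ((Int.gcd u v ^ 2 : ℕ) : ℤ) := by rw [h2]
    push_cast at h3
    rwa [abs_of_pos hx] at h3
  have h2 : IsCoprime x (Int.gcd y z : ℤ) := by
    rw [Int.isCoprime_iff_gcd_eq_one]
    by_contra hne
    obtain ⟨l, hl, hd⟩ := Nat.exists_prime_and_dvd hne
    have hd' : (l : ℤ) ∣ (Int.gcd x (Int.gcd y z : ℤ) : ℤ) := by exact_mod_cast hd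
    have h3 := hd'.trans (Int.gcd_dvd_right x (Int.gcd y z : ℤ))
    exact hc l hl (hd'.trans (Int.gcd_dvd_left _ _)) (h3.trans (Int.gcd_dvd_left _ _))
      (h3.trans (Int.gcd_dvd_right _ _))
  obtain ⟨m, hm | hm⟩ := Int.sq_of_isCoprime h2 h1
  · refine ⟨|m|, ?_, by rw [sq_abs, hm]⟩
    rw [abs_pos]; rintro rfl; simp at hm; omega
  · nlinarith [sq_nonneg m]

/-- One doubling step, cleared of denominators: `(a, b, c) / w` are the square roots of
`x`, `x + A²`, `x + B²` at a point and `(t, r, s) / w` those at its double, the sign of `t` being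
the one for which the three product formulas hold. -/
structure Step (A B w a b c t r s : ℤ) : Prop where
  hw : 0 < w
  ha : 0 < a
  hb : 0 < b
  hc : 0 < c
  hr : 0 < r
  hs : 0 < s
  eb : b ^ 2 = a ^ 2 + A ^ 2 * w ^ 2
  ec : c ^ 2 = a ^ 2 + B ^ 2 * w ^ 2
  er : r ^ 2 = t ^ 2 + A ^ 2 * w ^ 2
  es : s ^ 2 = t ^ 2 + B ^ 2 * w ^ 2
  pa : (t + r) * (t + s) = a ^ 2
  pb : (t + r) * (r + s) = b ^ 2
  pc : (t + s) * (r + s) = c ^ 2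
  caw : IsCoprime a w
  ctw : IsCoprime t w

lemma prime_not_dvd_coprime {l : ℕ} (hl : l.Prime) {x y : ℤ} (h : IsCoprime x y)
    (hx : (l : ℤ) ∣ x) (hy : (l : ℤ) ∣ y) : False := by
  have h1 := h.isUnit_of_dvd' hx hy
  exact (Nat.prime_iff_prime_int.mp hl).not_isUnit h1

/-- The pairwise products of `t + r`, `t + s`, `r + s` are squares and the three numbers have no
common prime factor, so each of them is a square. -/
lemma Step.squares {A B w a b c t r s : ℤ} (hAB : IsCoprime A B) (hA : A % 2 = 1)
    (h : Step A B w a b c t r s) :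
    ∃ m n l : ℤ, 0 < m ∧ 0 < n ∧ 0 < l ∧ t + r = m ^ 2 ∧ t + s = n ^ 2 ∧ r + s = l ^ 2 ∧
      a = m * n ∧ b = m * l ∧ c = n * l := by
  obtain ⟨hw, ha, hb, hc, hr, hs, eb, ec, er, es, pa, pb, pc, caw, ctw⟩ := h
  have hγ : 0 < r + s := by positivity
  have hα : 0 < t + r := (mul_pos_iff_of_pos_right hγ).mp (by rw [pb]; positivity)
  have hβ : 0 < t + s := (mul_pos_iff_of_pos_right hγ).mp (by rw [pc]; positivity)
  have hno : ∀ l : ℕ, l.Prime → (l : ℤ) ∣ t + r → (l : ℤ) ∣ t + s → (l : ℤ) ∣ r + s → False := by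
    intro l hl h1 h2 h3
    have hp := Nat.prime_iff_prime_int.mp hl
    rcases hl.eq_two_or_odd' with rfl | hodd
    · -- at the prime 2 the products `a²`, `b²`, `c²` are even, which forces `w` to be even
      have d1 : (2 : ℤ) ∣ a := by
        refine Int.prime_two.dvd_of_dvd_pow (n := 2) ?_
        rw [← pa]; exact Dvd.dvd.mul_right h1 _
      have d2 : (2 : ℤ) ∣ b := by
        refine Int.prime_two.dvd_of_dvd_pow (n := 2) ?_
        rw [← pb]; exact Dvd.dvd.mul_right h1 _
      have d3 : (2 : ℤ) ∣ (A * w) ^ 2 := by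
        have : (A * w) ^ 2 = b ^ 2 - a ^ 2 := by rw [eb]; ring
        rw [this]
        exact dvd_sub (dvd_pow d2 two_ne_zero) (dvd_pow d1 two_ne_zero)
      have d4 := Int.prime_two.dvd_of_dvd_pow d3
      rcases Int.prime_two.dvd_mul.mp d4 with d5 | d5
      · omega
      · exact prime_not_dvd_coprime hl caw d1 d5
    · have hl2 : ¬ (l : ℤ) ∣ 2 := by
        intro hd
        have hd' : l ∣ 2 := by exact_mod_cast hd
        have := (Nat.prime_dvd_prime_iff_eq hl Nat.prime_two).mp hd'
        subst this; revert hodd; decide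
      have half : ∀ z : ℤ, (l : ℤ) ∣ 2 * z → (l : ℤ) ∣ z := fun z hz =>
        (hp.dvd_mul.mp hz).resolve_left hl2
      have dt : (l : ℤ) ∣ t := half t (by
        rw [show 2 * t = (t + r) + (t + s) - (r + s) by ring]
        exact dvd_sub (dvd_add h1 h2) h3)
      have dr : (l : ℤ) ∣ r := by simpa using dvd_sub h1 dt
      have ds : (l : ℤ) ∣ s := by simpa using dvd_sub h2 dt
      have hwl : ¬ (l : ℤ) ∣ w := fun hd => prime_not_dvd_coprime hl ctw dt hd
      have dA : (l : ℤ) ∣ A * w := by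
        refine hp.dvd_of_dvd_pow (n := 2) ?_
        have : (A * w) ^ 2 = r ^ 2 - t ^ 2 := by rw [er]; ring
        rw [this]
        exact dvd_sub (dvd_pow dr two_ne_zero) (dvd_pow dt two_ne_zero)
      have dB : (l : ℤ) ∣ B * w := by
        refine hp.dvd_of_dvd_pow (n := 2) ?_
        have : (B * w) ^ 2 = s ^ 2 - t ^ 2 := by rw [es]; ring
        rw [this]
        exact dvd_sub (dvd_pow ds two_ne_zero) (dvd_pow dt two_ne_zero)
      exact prime_not_dvd_coprime hl hAB ((hp.dvd_mul.mp dA).resolve_right hwl)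
        ((hp.dvd_mul.mp dB).resolve_right hwl)
  obtain ⟨m, hm, em⟩ := sq_of_mul_gcd hα pa pb hno
  obtain ⟨n, hn, en⟩ := sq_of_mul_gcd hβ (by rw [mul_comm]; exact pa) pc
    (fun l hl h1 h2 h3 => hno l hl h2 h1 h3)
  obtain ⟨l, hl, el⟩ := sq_of_mul_gcd hγ (by rw [mul_comm]; exact pb) (by rw [mul_comm]; exact pc)
    (fun l hl h1 h2 h3 => hno l hl h2 h3 h1)
  refine ⟨m, n, l, hm, hn, hl, em, en, el, ?_, ?_, ?_⟩
  · rw [em, en, ← mul_pow] at pa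
    exact ((pow_left_inj₀ (by positivity) ha.le two_ne_zero).mp pa).symm
  · rw [em, el, ← mul_pow] at pb
    exact ((pow_left_inj₀ (by positivity) hb.le two_ne_zero).mp pb).symm
  · rw [en, el, ← mul_pow] at pc
    exact ((pow_left_inj₀ (by positivity) hc.le two_ne_zero).mp pc).symm

lemma sq_of_sq_mul {x y z : ℤ} (hx : x ≠ 0) (h : x ^ 2 * y = z ^ 2) : ∃ v, y = v ^ 2 := by
  have h1 : x ^ 2 ∣ z ^ 2 := ⟨y, h.symm⟩
  rw [Int.pow_dvd_pow_iff two_ne_zero] at h1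
  obtain ⟨v, rfl⟩ := h1
  exact ⟨v, mul_left_cancel₀ (pow_ne_zero 2 hx) (by rw [h]; ring)⟩

lemma sq_of_mul_coprime {x y z u v : ℤ} (hx : 0 < x) (hyz : IsCoprime y z)
    (hxy : x * y = u ^ 2) (hxz : x * z = v ^ 2) : ∃ m : ℤ, 0 < m ∧ x = m ^ 2 :=
  sq_of_mul_gcd hx hxy hxz fun _ hl _ h2 h3 => prime_not_dvd_coprime hl hyz h2 h3

/-- Two consecutive doubling steps with the same denominator `w` force the middle point to have
`√x = 2 (μ ν)² / w` and `|y| = (2 μ² ν² l)² / w³`. -/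
lemma Step.shape {A B w a₀ b₀ c₀ a b c t r s σ : ℤ} (hAB : IsCoprime A B) (hA : A % 2 = 1)
    (hσ : σ ^ 2 = 1)
    (h₀ : Step A B w a₀ b₀ c₀ (σ * a) b c) (h₁ : Step A B w a b c t r s) :
    ∃ μ ν l : ℤ, 0 < μ ∧ 0 < ν ∧ 0 < l ∧ a = μ ^ 2 * (2 * ν ^ 2) ∧ b = μ ^ 2 * l ∧
      c = 2 * ν ^ 2 * l ∧ r + s = l ^ 2 := by
  obtain ⟨m', n', l', hm', hn', hl', em', en', -, -, -, -⟩ := h₀.squares hAB hA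
  obtain ⟨m, n, l, hm, hn, hl, em, en, el, ea, eb, ec⟩ := h₁.squares hAB hA
  obtain ⟨hw, -, -, -, -, -, qb, qc, qr, qs, -, -, -, caw, ctw⟩ := h₁
  -- `w`, `m`, `l` are odd and `n` is even
  have hwo : w % 2 = 1 := by
    rcases Int.emod_two_eq_zero_or_one w with h | h
    · exfalso
      have h1 : ¬ (2 : ℤ) ∣ a := fun hd =>
        prime_not_dvd_coprime Nat.prime_two caw hd (Int.dvd_of_emod_eq_zero h)
      have hao : Odd a := by rw [← Int.not_even_iff_odd, even_iff_two_dvd]; exact h1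
      have hwe : Even w := Int.even_iff.mpr h
      have hbo : Odd (b ^ 2) := by
        rw [qb]; exact hao.pow.add_even ((hwe.pow_of_ne_zero two_ne_zero).mul_left _)
      have hbo' : Odd b := (Int.odd_pow' two_ne_zero).mp hbo
      rw [ea, Int.odd_mul] at hao
      rw [eb, Int.odd_mul] at hbo'
      have o1 := hao.1.pow (n := 2)
      have o2 := hao.2.pow (n := 2)
      have o3 := hbo'.2.pow (n := 2)
      rw [Int.odd_iff] at o1 o2 o3
      omega
    · exact h
  have hae : a % 2 = 0 := by
    rcases Int.emod_two_eq_zero_or_one a with h | h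
    · exact h
    · exfalso
      have sq4 : ∀ z : ℤ, z % 2 = 1 → z ^ 2 % 4 = 1 := by
        intro z hz
        obtain ⟨k, hk⟩ : ∃ k, z = 2 * k + 1 := ⟨z / 2, by omega⟩
        rw [hk, show (2 * k + 1) ^ 2 = 4 * (k ^ 2 + k) + 1 by ring]; omega
      have h1 := sq4 a h
      have h2 := sq4 (A * w) (by rw [Int.mul_emod, hA, hwo]; rfl)
      rw [mul_pow] at h2
      rcases Int.emod_two_eq_zero_or_one b with h3 | h3
      · obtain ⟨k, hk⟩ := Int.dvd_of_emod_eq_zero h3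
        have : b ^ 2 = 4 * k ^ 2 := by rw [hk]; ring
        omega
      · have := sq4 b h3
        omega
  have hbo : Odd b := by
    rw [← Int.odd_pow' two_ne_zero, qb]
    exact ((Int.even_iff.mpr hae).pow_of_ne_zero two_ne_zero).add_odd
      ((Int.odd_iff.mpr hA).pow.mul (Int.odd_iff.mpr hwo).pow)
  rw [eb, Int.odd_mul] at hbo
  obtain ⟨hmo, hlo⟩ := hbo
  have hne : Even n := by
    have : Even a := Int.even_iff.mpr hae
    rw [ea, Int.even_mul] at this
    exact this.resolve_left (Int.not_even_iff_odd.mpr hmo)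
  have fAw : (r - t) * m ^ 2 = (A * w) ^ 2 := by rw [← em]; linear_combination qr
  have fBw : (s - t) * n ^ 2 = (B * w) ^ 2 := by rw [← en]; linear_combination qs
  have hcop : ∀ x y : ℤ, (∀ p : ℕ, p.Prime → (p : ℤ) ∣ x → (p : ℤ) ∣ y → False) →
      IsCoprime x y := by
    intro x y hxy
    rw [Int.isCoprime_iff_gcd_eq_one]
    by_contra hne
    obtain ⟨p, hp, hd⟩ := Nat.exists_prime_and_dvd hne
    have hd' : (p : ℤ) ∣ (Int.gcd x y : ℤ) := by exact_mod_cast hd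
    exact hxy p hp (hd'.trans (Int.gcd_dvd_left _ _)) (hd'.trans (Int.gcd_dvd_right _ _))
  have hfin : ∀ p : ℕ, p.Prime → (p : ℤ) ∣ a → (p : ℤ) ∣ (A * w) ^ 2 → (p : ℤ) ∣ (B * w) ^ 2 →
      False := by
    intro p hp da dA dB
    have hp' := Nat.prime_iff_prime_int.mp hp
    have hwl : ¬ (p : ℤ) ∣ w := fun hd => prime_not_dvd_coprime hp caw da hd
    exact prime_not_dvd_coprime hp hAB
      ((hp'.dvd_mul.mp (hp'.dvd_of_dvd_pow dA)).resolve_right hwl)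
      ((hp'.dvd_mul.mp (hp'.dvd_of_dvd_pow dB)).resolve_right hwl)
  have cln : IsCoprime l n := by
    refine hcop _ _ fun p hp dl dn => hfin p hp ?_ ?_ ?_
    · rw [ea]; exact dn.mul_left _
    · rw [← fAw]
      refine Dvd.dvd.mul_right ?_ _
      have : r - t = l ^ 2 - n ^ 2 := by linear_combination el - en
      rw [this]
      exact dvd_sub (dvd_pow dl two_ne_zero) (dvd_pow dn two_ne_zero)
    · rw [← fBw]; exact (dvd_pow dn two_ne_zero).mul_left _
  have clm : IsCoprime l m := by
    refine hcop _ _ fun p hp dl dm => hfin p hp ?_ ?_ ?_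
    · rw [ea]; exact dm.mul_right _
    · rw [← fAw]; exact (dvd_pow dm two_ne_zero).mul_left _
    · rw [← fBw]
      refine Dvd.dvd.mul_right ?_ _
      have : s - t = l ^ 2 - m ^ 2 := by linear_combination el - em
      rw [this]
      exact dvd_sub (dvd_pow dl two_ne_zero) (dvd_pow dm two_ne_zero)
  -- `m` times each of the coprime numbers `l ± σ n` is a square, and `n` times each of the
  -- numbers `l ± σ m`, whose gcd is 2, is a square; so `m` and `2 n` are squares
  have m1 : m * (l + σ * n) = m' ^ 2 := by rw [← em', ea, eb]; ring
  have n1 : n * (l + σ * m) = n' ^ 2 := by rw [← en', ea, ec]; ring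
  obtain ⟨m'', m2⟩ : ∃ v, m * (l - σ * n) = v ^ 2 := by
    refine sq_of_sq_mul hm'.ne' (z := A * w) ?_
    rw [← m1]
    have e : (m * l) ^ 2 = (m * n) ^ 2 + A ^ 2 * w ^ 2 := by rw [← ea, ← eb, qb]
    linear_combination e - (m * n) ^ 2 * hσ
  obtain ⟨n'', n2⟩ : ∃ v, n * (l - σ * m) = v ^ 2 := by
    refine sq_of_sq_mul hn'.ne' (z := B * w) ?_
    rw [← n1]
    have e : (n * l) ^ 2 = (m * n) ^ 2 + B ^ 2 * w ^ 2 := by rw [← ea, ← ec, qc]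
    linear_combination e - (m * n) ^ 2 * hσ
  have hσo : Odd σ := by
    rw [← Int.odd_pow' two_ne_zero, hσ]; exact odd_one
  obtain ⟨μ, hμ, eμ⟩ : ∃ v : ℤ, 0 < v ∧ m = v ^ 2 := by
    refine sq_of_mul_coprime hm ?_ m1 m2
    obtain ⟨u, v, huv⟩ := cln
    obtain ⟨k, hk⟩ : Odd (l + σ * n) := hlo.add_even (hne.mul_left _)
    -- `2 = (u + σ v) (l + σ n) + (u - σ v) (l - σ n)` and `l + σ n = 2 k + 1`
    refine ⟨1 - k * (u + σ * v), -(k * (u - σ * v)), ?_⟩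
    linear_combination hk - 2 * k * huv - 2 * k * n * v * hσ
  obtain ⟨x, hx⟩ : Even (l + σ * m) := hlo.add_odd (hσo.mul hmo)
  obtain ⟨y, hy⟩ : Even (l - σ * m) := hlo.sub_odd (hσo.mul hmo)
  obtain ⟨κ, hκ, eκ⟩ : ∃ v : ℤ, 0 < v ∧ 2 * n = v ^ 2 := by
    refine sq_of_mul_coprime (y := x) (z := y) (by positivity) ?_
      (by rw [← n1, hx]; ring) (by rw [← n2, hy]; ring)
    obtain ⟨u, v, huv⟩ := clm
    refine ⟨u + σ * v, u - σ * v, ?_⟩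
    have e1 : x + y = l := by linarith
    have e2 : x - y = σ * m := by linarith
    linear_combination huv + u * e1 + σ * v * e2 + v * m * hσ
  have hκe : (2 : ℤ) ∣ κ := by
    refine Int.prime_two.dvd_of_dvd_pow (n := 2) ?_
    rw [← eκ]; exact dvd_mul_right _ _
  obtain ⟨ν, rfl⟩ := hκe
  have eν : n = 2 * ν ^ 2 := by linarith
  refine ⟨μ, ν, l, hμ, by linarith, hl, ?_, ?_, ?_, el⟩
  · rw [ea, eμ, eν]
  · rw [eb, eμ]
  · rw [ec, eν]

/-! ### The curve and its group law -/

/-- The curve `y² = x (x + A²) (x + B²)`; for `A = p² - q²`, `B = 2pq` this is EF1. -/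
def faceCurve (A B : ℤ) : WeierstrassCurve.Affine ℚ :=
  { a₁ := 0, a₂ := (A : ℚ) ^ 2 + (B : ℚ) ^ 2, a₃ := 0, a₄ := (A : ℚ) ^ 2 * (B : ℚ) ^ 2, a₆ := 0 }

variable {A B : ℤ}

/-- The `x`-coordinate, with the value `0` at the point at infinity. -/
def xc : (faceCurve A B).Point → ℚ
  | .zero => 0
  | .some x _ _ => x

/-- The `y`-coordinate, with the value `0` at the point at infinity. -/
def yc : (faceCurve A B).Point → ℚ
  | .zero => 0
  | .some _ y _ => y

lemma faceCurve_equation (x y : ℚ) : (faceCurve A B).Equation x y ↔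
    y ^ 2 = x * (x + (A : ℚ) ^ 2) * (x + (B : ℚ) ^ 2) := by
  rw [WeierstrassCurve.Affine.equation_iff]
  simp only [faceCurve]
  constructor <;> intro h <;> linear_combination h

lemma curve_eq {P : (faceCurve A B).Point} (hP : P ≠ 0) :
    yc P ^ 2 = xc P * (xc P + (A : ℚ) ^ 2) * (xc P + (B : ℚ) ^ 2) := by
  cases P with
  | zero => exact absurd rfl hP
  | some x y h => exact (faceCurve_equation x y).mp h.1

lemma exists_point (hA : A ≠ 0) (hB : B ≠ 0) (hAB : A ^ 2 ≠ B ^ 2) {x y : ℚ}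
    (h : y ^ 2 = x * (x + (A : ℚ) ^ 2) * (x + (B : ℚ) ^ 2)) :
    ∃ P : (faceCurve A B).Point, P ≠ 0 ∧ xc P = x ∧ yc P = y := by
  have hΔ : (faceCurve A B).Δ ≠ 0 := by
    have e : (faceCurve A B).Δ = 16 * ((A : ℚ) * B) ^ 4 * ((A : ℚ) ^ 2 - (B : ℚ) ^ 2) ^ 2 := by
      simp only [faceCurve, WeierstrassCurve.Δ, WeierstrassCurve.b₂, WeierstrassCurve.b₄,
        WeierstrassCurve.b₆, WeierstrassCurve.b₈]
      ring
    rw [e]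
    have h1 : (A : ℚ) ≠ 0 := by exact_mod_cast hA
    have h2 : (B : ℚ) ≠ 0 := by exact_mod_cast hB
    have h3 : (A : ℚ) ^ 2 - (B : ℚ) ^ 2 ≠ 0 := by
      rw [sub_ne_zero]; exact_mod_cast hAB
    positivity
  have hn : (faceCurve A B).Nonsingular x y :=
    ((faceCurve A B).equation_iff_nonsingular_of_Δ_ne_zero hΔ).mp ((faceCurve_equation x y).mpr h)
  exact ⟨.some x y hn, WeierstrassCurve.Affine.Point.some_ne_zero hn, rfl, rfl⟩

lemma xc_neg (P : (faceCurve A B).Point) : xc (-P) = xc P := by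
  cases P with
  | zero => rfl
  | some x y h => rfl

lemma yc_neg (P : (faceCurve A B).Point) : yc (-P) = -yc P := by
  cases P with
  | zero => simp [yc, ← WeierstrassCurve.Affine.Point.zero_def]
  | some x y h =>
    rw [WeierstrassCurve.Affine.Point.neg_some]
    simp [yc, faceCurve, WeierstrassCurve.Affine.negY]

lemma eq_or_eq_neg {P Q : (faceCurve A B).Point} (hP : P ≠ 0) (hQ : Q ≠ 0) (h : xc P = xc Q) :
    P = Q ∨ P = -Q := by
  cases P with
  | zero => exact absurd rfl hP
  | some x y h1 =>
  cases Q with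
  | zero => exact absurd rfl hQ
  | some x' y' h2 =>
    exact (WeierstrassCurve.Affine.Point.X_eq_iff ).mp h

lemma two_nsmul_of_yc {P : (faceCurve A B).Point} (h : yc P = 0) : 2 • P = 0 := by
  cases P with
  | zero => exact smul_zero (A := (faceCurve A B).Point) 2
  | some x y h1 =>
    rw [two_nsmul]
    refine WeierstrassCurve.Affine.Point.add_self_of_Y_eq ?_
    simp only [yc] at h
    simp [faceCurve, WeierstrassCurve.Affine.negY, h]

lemma xc_double {P : (faceCurve A B).Point} (h : yc P ≠ 0) :
    xc (2 • P) = ((xc P ^ 2 - (A : ℚ) ^ 2 * (B : ℚ) ^ 2) / (2 * yc P)) ^ 2 := by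
  cases P with
  | zero => exact absurd rfl h
  | some x y h1 =>
    have heq := (faceCurve_equation x y).mp h1.1
    simp only [yc] at h
    have hne : y ≠ (faceCurve A B).negY x y := by
      simp only [faceCurve, WeierstrassCurve.Affine.negY]
      intro h2; apply h; linarith
    rw [two_nsmul, WeierstrassCurve.Affine.Point.add_self_of_Y_ne hne]
    simp only [xc, yc]
    rw [WeierstrassCurve.Affine.slope_of_Y_ne rfl hne]
    simp only [WeierstrassCurve.Affine.addX, WeierstrassCurve.Affine.negY, faceCurve]
    have h2 : y - (-y - 0 * x - 0) ≠ 0 := by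
      intro h3; apply h; linarith
    rw [show y - (-y - 0 * x - 0) = 2 * y by ring]
    field_simp
    ring_nf
    ring_nf at heq
    rw [heq]; ring

lemma xc_add_sub {P Q : (faceCurve A B).Point} (hP : P ≠ 0) (hQ : Q ≠ 0) (h : xc P ≠ xc Q) :
    xc (P + Q) - xc (P - Q) = -(4 * yc P * yc Q) / (xc P - xc Q) ^ 2 ∧
    xc (P + Q) * xc (P - Q) =
      ((xc P * xc Q - (A : ℚ) ^ 2 * (B : ℚ) ^ 2) / (xc P - xc Q)) ^ 2 := by
  have add : ∀ {P Q : (faceCurve A B).Point}, P ≠ 0 → Q ≠ 0 → xc P ≠ xc Q →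
      xc (P + Q) = ((yc P - yc Q) / (xc P - xc Q)) ^ 2 - ((A : ℚ) ^ 2 + (B : ℚ) ^ 2)
        - xc P - xc Q := by
    intro P Q hP hQ h
    cases P with
    | zero => exact absurd rfl hP
    | some x y h1 =>
    cases Q with
    | zero => exact absurd rfl hQ
    | some x' y' h2 =>
      simp only [xc] at h
      rw [WeierstrassCurve.Affine.Point.add_of_X_ne h]
      simp only [xc, yc]
      rw [WeierstrassCurve.Affine.slope_of_X_ne h]
      simp only [WeierstrassCurve.Affine.addX, faceCurve]
      ring
  have e1 := add hP hQ h
  have e2 := add hP (neg_ne_zero.mpr hQ) (by rwa [xc_neg])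
  rw [← sub_eq_add_neg, xc_neg, yc_neg] at e2
  have h0 : xc P - xc Q ≠ 0 := sub_ne_zero.mpr h
  have q1 := curve_eq hP
  have q2 := curve_eq hQ
  rw [e1, e2]
  generalize xc P = x at *
  generalize xc Q = x' at *
  generalize yc P = y at *
  generalize yc Q = y' at *
  constructor
  · field_simp; ring
  · have h3 : ((y - y') / (x - x')) ^ 2 - ((A : ℚ) ^ 2 + (B : ℚ) ^ 2) - x - x' =
      (y ^ 2 + y' ^ 2 - 2 * y * y' - ((A : ℚ) ^ 2 + (B : ℚ) ^ 2 + x + x') * (x - x') ^ 2) /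
        (x - x') ^ 2 := by field_simp; ring
    have h4 : ((y - -y') / (x - x')) ^ 2 - ((A : ℚ) ^ 2 + (B : ℚ) ^ 2) - x - x' =
      (y ^ 2 + y' ^ 2 + 2 * y * y' - ((A : ℚ) ^ 2 + (B : ℚ) ^ 2 + x + x') * (x - x') ^ 2) /
        (x - x') ^ 2 := by field_simp; ring
    rw [h3, h4, div_mul_div_comm, div_pow, div_eq_div_iff (by positivity) (by positivity)]
    have h5 : (y ^ 2 + y' ^ 2 - 2 * y * y' -
          ((A : ℚ) ^ 2 + (B : ℚ) ^ 2 + x + x') * (x - x') ^ 2) *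
        (y ^ 2 + y' ^ 2 + 2 * y * y' - ((A : ℚ) ^ 2 + (B : ℚ) ^ 2 + x + x') * (x - x') ^ 2) =
        (y ^ 2 + y' ^ 2 - ((A : ℚ) ^ 2 + (B : ℚ) ^ 2 + x + x') * (x - x') ^ 2) ^ 2
          - 4 * y ^ 2 * y' ^ 2 := by ring
    rw [h5, q1, q2]; ring

lemma finite_points (h : {P : ℚ × ℚ | P.2 ^ 2 = P.1 * (P.1 + (A : ℚ) ^ 2) *
    (P.1 + (B : ℚ) ^ 2)}.Finite) : Finite (faceCurve A B).Point := by
  have := h.to_subtype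
  have hfin : Finite {P : ℚ × ℚ | P.2 ^ 2 = P.1 * (P.1 + (A : ℚ) ^ 2) *
    (P.1 + (B : ℚ) ^ 2)} := this
  let f : (faceCurve A B).Point → Option {P : ℚ × ℚ | P.2 ^ 2 = P.1 * (P.1 + (A : ℚ) ^ 2) *
      (P.1 + (B : ℚ) ^ 2)}
    | .zero => none
    | .some x y h => some ⟨(x, y), (faceCurve_equation x y).mp h.1⟩
  refine Finite.of_injective f ?_
  intro P Q hPQ
  cases P <;> cases Q <;> simp_all [f]

/-! ### Points of odd order -/

lemma xc_double_add_sq {P : (faceCurve A B).Point} (h : yc P ≠ 0) :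
    xc (2 • P) + (A : ℚ) ^ 2 =
      ((xc P ^ 2 + 2 * (A : ℚ) ^ 2 * xc P + (A : ℚ) ^ 2 * (B : ℚ) ^ 2) / (2 * yc P)) ^ 2 ∧
    xc (2 • P) + (B : ℚ) ^ 2 =
      ((xc P ^ 2 + 2 * (B : ℚ) ^ 2 * xc P + (A : ℚ) ^ 2 * (B : ℚ) ^ 2) / (2 * yc P)) ^ 2 := by
  have hP : P ≠ 0 := by rintro rfl; exact h rfl
  have heq := curve_eq hP
  rw [xc_double h]
  generalize xc P = x at *
  generalize yc P = y at *
  constructor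
  · rw [div_pow, div_pow, div_add' _ _ _ (by positivity), div_left_inj' (by positivity)]
    linear_combination 4 * (A : ℚ) ^ 2 * heq
  · rw [div_pow, div_pow, div_add' _ _ _ (by positivity), div_left_inj' (by positivity)]
    linear_combination 4 * (B : ℚ) ^ 2 * heq

/-- Nonzero points killed by an odd number, i.e. nonzero points of finite odd order. -/
def OddTorsion (P : (faceCurve A B).Point) : Prop := P ≠ 0 ∧ ∃ j : ℕ, (2 * j + 1) • P = 0

lemma OddTorsion.two {P : (faceCurve A B).Point} (h : OddTorsion P) : OddTorsion (2 • P) := by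
  obtain ⟨h0, j, hj⟩ := h
  refine ⟨fun h2 => h0 ?_, j, by rw [smul_comm, hj, nsmul_zero]⟩
  rw [add_smul, mul_comm, mul_smul, h2, nsmul_zero, zero_add, one_smul] at hj
  exact hj

lemma OddTorsion.three {P : (faceCurve A B).Point} (h : OddTorsion P) (h3 : 3 • P ≠ 0) : OddTorsion (3 • P) := by
  obtain ⟨h0, j, hj⟩ := h
  exact ⟨h3, j, by rw [smul_comm, hj, nsmul_zero]⟩

lemma OddTorsion.yc_ne {P : (faceCurve A B).Point} (h : OddTorsion P) : yc P ≠ 0 :=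
  fun h0 => h.two.1 (two_nsmul_of_yc h0)

lemma OddTorsion.xc_ne {P : (faceCurve A B).Point} (h : OddTorsion P) : xc P ≠ 0 := by
  intro h0
  have := curve_eq h.1
  rw [h0, zero_mul, zero_mul] at this
  exact h.yc_ne (pow_eq_zero_iff two_ne_zero |>.mp this)

/-- In a cyclic group of odd order every element is a double. -/
lemma OddTorsion.exists_half {P : (faceCurve A B).Point} (h : OddTorsion P) :
    ∃ Q : (faceCurve A B).Point, 2 • Q = P ∧ yc Q ≠ 0 := by
  obtain ⟨h0, j, hj⟩ := h
  have e : 2 • ((j + 1) • P) = P := by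
    rw [← mul_smul, show 2 * (j + 1) = (2 * j + 1) + 1 by ring, add_smul, hj, zero_add, one_smul]
  exact ⟨(j + 1) • P, e, fun hy => h0 (by rw [← e]; exact two_nsmul_of_yc hy)⟩

/-- `a / w`, `b / w`, `c / w` are the positive square roots of `x`, `x + A²`, `x + B²` at `P`, with
`a / w` in lowest terms. -/
structure Roots (P : (faceCurve A B).Point) (w a b c : ℤ) : Prop where
  hw : 0 < w
  ha : 0 < a
  hb : 0 < b
  hc : 0 < c
  cop : IsCoprime a w
  hx : xc P = ((a : ℚ) / w) ^ 2
  eb : b ^ 2 = a ^ 2 + A ^ 2 * w ^ 2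
  ec : c ^ 2 = a ^ 2 + B ^ 2 * w ^ 2

/-- A point of odd order is a double, so `x`, `x + A²` and `x + B²` are squares there. -/
lemma OddTorsion.exists_roots {P : (faceCurve A B).Point} (h : OddTorsion P) : ∃ w a b c, Roots P w a b c := by
  obtain ⟨Q, rfl, hy⟩ := h.exists_half
  have e0 := xc_double hy
  obtain ⟨e1, e2⟩ := xc_double_add_sq hy
  have hx0 := h.xc_ne
  generalize (xc Q ^ 2 - (A : ℚ) ^ 2 * (B : ℚ) ^ 2) / (2 * yc Q) = T₀ at e0
  have hT0 : T₀ ≠ 0 := by rintro rfl; simp at e0; exact hx0 e0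
  have hT : xc (2 • Q) = |T₀| ^ 2 := by rw [e0, sq_abs]
  have hTpos : 0 < |T₀| := abs_pos.mpr hT0
  set T := |T₀|
  obtain ⟨a, w, hw, ha, hcop, hTe⟩ :
      ∃ a w : ℤ, 0 < w ∧ 0 < a ∧ IsCoprime a w ∧ T = (a : ℚ) / w := by
    refine ⟨T.num, T.den, by exact_mod_cast T.den_pos, Rat.num_pos.mpr hTpos, ?_, ?_⟩
    · rw [Int.isCoprime_iff_gcd_eq_one]; exact T.reduced
    · rw [Int.cast_natCast]; exact (Rat.num_div_den T).symm
  have hwq : (w : ℚ) ≠ 0 := by exact_mod_cast hw.ne'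
  have root : ∀ (D : ℤ) (R : ℚ), xc (2 • Q) + (D : ℚ) ^ 2 = R ^ 2 →
      ∃ b : ℤ, 0 < b ∧ b ^ 2 = a ^ 2 + D ^ 2 * w ^ 2 := by
    intro D R hR
    have hsq : IsSquare (((a ^ 2 + D ^ 2 * w ^ 2 : ℤ)) : ℚ) := by
      refine ⟨R * w, ?_⟩
      have e3 : R * w * (R * w) = R ^ 2 * (w : ℚ) ^ 2 := by ring
      rw [e3, ← hR, hT, hTe]
      push_cast
      field_simp
    rw [Rat.isSquare_intCast_iff] at hsq
    obtain ⟨b, hb⟩ := hsq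
    have hpos : 0 < a ^ 2 + D ^ 2 * w ^ 2 := by positivity
    refine ⟨|b|, ?_, by rw [sq_abs, hb]; ring⟩
    rw [abs_pos]; rintro rfl; rw [hb] at hpos; simp at hpos
  obtain ⟨b, hb, eb⟩ := root A _ e1
  obtain ⟨c, hc, ec⟩ := root B _ e2
  exact ⟨w, a, b, c, hw, ha, hb, hc, hcop, by rw [← hTe, hT], eb, ec⟩

lemma Roots.den {P : (faceCurve A B).Point} {w a b c : ℤ} (h : Roots P w a b c) :
    ((xc P).den : ℤ) = w ^ 2 := by
  rw [h.hx, Rat.den_pow]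
  push_cast
  rw [Rat.den_div_eq_of_coprime h.hw (Int.isCoprime_iff_gcd_eq_one.mp h.cop)]

lemma Roots.unique {P Q : (faceCurve A B).Point} {w a b c a' b' c' : ℤ} (h : Roots P w a b c)
    (h' : Roots Q w a' b' c') (hx : xc P = xc Q) : a = a' ∧ b = b' ∧ c = c' := by
  have hwq : (w : ℚ) ≠ 0 := by exact_mod_cast h.hw.ne'
  have ea : a ^ 2 = a' ^ 2 := by
    rw [h.hx, h'.hx, div_pow, div_pow, div_left_inj' (by positivity)] at hx
    exact_mod_cast hx
  refine ⟨(pow_left_inj₀ h.ha.le h'.ha.le two_ne_zero).mp ea,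
    (pow_left_inj₀ h.hb.le h'.hb.le two_ne_zero).mp ?_,
    (pow_left_inj₀ h.hc.le h'.hc.le two_ne_zero).mp ?_⟩
  · rw [h.eb, h'.eb, ea]
  · rw [h.ec, h'.ec, ea]

/-- The product formulas for the roots at `P` and at `2 • P`: with `T, R, S` the roots at `P` and
`τ, ρ, ς` those at `2 • P`, `τ` suitably signed, one has `τ + ρ = T R / S`, `τ + ς = T S / R` and
`ρ + ς = R S / T`. -/
lemma Roots.double {P : (faceCurve A B).Point} {w a b c w₂ a₂ b₂ c₂ : ℤ} (hA : A ≠ 0) (hB : B ≠ 0)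
    (hP : P ≠ 0) (h : Roots P w a b c) (h₂ : Roots (2 • P) w₂ a₂ b₂ c₂) :
    ∃ σ : ℤ, σ ^ 2 = 1 ∧ (σ * a₂ + b₂) * (σ * a₂ + c₂) * w ^ 2 = a ^ 2 * w₂ ^ 2 ∧
      (σ * a₂ + b₂) * (b₂ + c₂) * w ^ 2 = b ^ 2 * w₂ ^ 2 ∧
      (σ * a₂ + c₂) * (b₂ + c₂) * w ^ 2 = c ^ 2 * w₂ ^ 2 := by
  have hw : (0 : ℚ) < w := by exact_mod_cast h.hw
  have hw₂ : (0 : ℚ) < w₂ := by exact_mod_cast h₂.hw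
  obtain ⟨T, hT⟩ : ∃ T : ℚ, T = a / w := ⟨_, rfl⟩
  obtain ⟨R, hR⟩ : ∃ R : ℚ, R = b / w := ⟨_, rfl⟩
  obtain ⟨S, hS⟩ : ∃ S : ℚ, S = c / w := ⟨_, rfl⟩
  have hT0 : 0 < T := by
    rw [hT]; have : (0 : ℚ) < a := by exact_mod_cast h.ha
    positivity
  have hR0 : 0 < R := by
    rw [hR]; have : (0 : ℚ) < b := by exact_mod_cast h.hb
    positivity
  have hS0 : 0 < S := by
    rw [hS]; have : (0 : ℚ) < c := by exact_mod_cast h.hc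
    positivity
  have eR : R ^ 2 = T ^ 2 + (A : ℚ) ^ 2 := by
    have : (b : ℚ) ^ 2 = a ^ 2 + A ^ 2 * w ^ 2 := by exact_mod_cast h.eb
    rw [hR, hT, div_pow, this]; field_simp
  have eS : S ^ 2 = T ^ 2 + (B : ℚ) ^ 2 := by
    have : (c : ℚ) ^ 2 = a ^ 2 + B ^ 2 * w ^ 2 := by exact_mod_cast h.ec
    rw [hS, hT, div_pow, this]; field_simp
  have hx : xc P = T ^ 2 := by rw [h.hx, hT]
  have hy : yc P ^ 2 = (T * R * S) ^ 2 := by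
    rw [curve_eq hP, hx, ← eR, ← eS]; ring
  have hy0 : yc P ≠ 0 := by
    intro h0; rw [h0] at hy
    have : 0 < (T * R * S) ^ 2 := by positivity
    rw [← hy] at this; simp at this
  have e0 := xc_double hy0
  obtain ⟨e1, e2⟩ := xc_double_add_sq hy0
  have hAq : (0 : ℚ) < (A : ℚ) ^ 2 := by
    have : (A : ℚ) ≠ 0 := by exact_mod_cast hA
    positivity
  have hBq : (0 : ℚ) < (B : ℚ) ^ 2 := by
    have : (B : ℚ) ≠ 0 := by exact_mod_cast hB
    positivity
  obtain ⟨τ, hτ⟩ : ∃ τ : ℚ, τ = (T ^ 4 - (A : ℚ) ^ 2 * (B : ℚ) ^ 2) / (2 * (T * R * S)) := ⟨_, rfl⟩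
  obtain ⟨ρ, hρ⟩ : ∃ ρ : ℚ, ρ = (T ^ 4 + 2 * (A : ℚ) ^ 2 * T ^ 2 + (A : ℚ) ^ 2 * (B : ℚ) ^ 2) /
    (2 * (T * R * S)) := ⟨_, rfl⟩
  obtain ⟨ς, hς⟩ : ∃ ς : ℚ, ς = (T ^ 4 + 2 * (B : ℚ) ^ 2 * T ^ 2 + (A : ℚ) ^ 2 * (B : ℚ) ^ 2) /
    (2 * (T * R * S)) := ⟨_, rfl⟩
  have hρ0 : 0 < ρ := by rw [hρ]; positivity
  have hς0 : 0 < ς := by rw [hς]; positivity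
  have f0 : xc (2 • P) = τ ^ 2 := by
    rw [e0, hτ, div_pow, div_pow, mul_pow, mul_pow, hy, hx]; ring
  have f1 : xc (2 • P) + (A : ℚ) ^ 2 = ρ ^ 2 := by
    rw [e1, hρ, div_pow, div_pow, mul_pow 2, mul_pow 2, hy, hx]; ring
  have f2 : xc (2 • P) + (B : ℚ) ^ 2 = ς ^ 2 := by
    rw [e2, hς, div_pow, div_pow, mul_pow 2, mul_pow 2, hy, hx]; ring
  have g0 : τ ^ 2 = ((a₂ : ℚ) / w₂) ^ 2 := by rw [← f0, h₂.hx]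
  have g1 : ρ = (b₂ : ℚ) / w₂ := by
    have hb : (0 : ℚ) < b₂ := by exact_mod_cast h₂.hb
    refine (pow_left_inj₀ hρ0.le (by positivity) two_ne_zero).mp ?_
    have : (b₂ : ℚ) ^ 2 = a₂ ^ 2 + A ^ 2 * w₂ ^ 2 := by exact_mod_cast h₂.eb
    rw [← f1, h₂.hx, div_pow, div_pow, this]; field_simp
  have g2 : ς = (c₂ : ℚ) / w₂ := by
    have hb : (0 : ℚ) < c₂ := by exact_mod_cast h₂.hc
    refine (pow_left_inj₀ hς0.le (by positivity) two_ne_zero).mp ?_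
    have : (c₂ : ℚ) ^ 2 = a₂ ^ 2 + B ^ 2 * w₂ ^ 2 := by exact_mod_cast h₂.ec
    rw [← f2, h₂.hx, div_pow, div_pow, this]; field_simp
  have i1 : τ + ρ = T * R / S := by
    rw [hτ, hρ, ← add_div, div_eq_div_iff (by positivity) (by positivity)]
    linear_combination -2 * T ^ 2 * S * eR
  have i2 : τ + ς = T * S / R := by
    rw [hτ, hς, ← add_div, div_eq_div_iff (by positivity) (by positivity)]
    linear_combination -2 * T ^ 2 * R * eS
  have i3 : ρ + ς = R * S / T := by
    rw [hρ, hς, ← add_div, div_eq_div_iff (by positivity) (by positivity)]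
    linear_combination -2 * T * S ^ 2 * eR - 2 * T * (T ^ 2 + (A : ℚ) ^ 2) * eS
  have j1 : (τ + ρ) * (τ + ς) = T ^ 2 := by rw [i1, i2]; field_simp
  have j2 : (τ + ρ) * (ρ + ς) = R ^ 2 := by rw [i1, i3]; field_simp
  have j3 : (τ + ς) * (ρ + ς) = S ^ 2 := by rw [i2, i3]; field_simp
  obtain ⟨σ, hσ, g3⟩ : ∃ σ : ℤ, σ ^ 2 = 1 ∧ τ = ((σ : ℚ) * a₂) / w₂ := by
    rcases sq_eq_sq_iff_eq_or_eq_neg.mp g0 with g | g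
    · exact ⟨1, by norm_num, by rw [g]; push_cast; ring⟩
    · exact ⟨-1, by norm_num, by rw [g]; push_cast; ring⟩
  rw [g3, g1, g2, ← add_div, ← add_div, div_mul_div_comm, hT, div_pow,
    div_eq_div_iff (by positivity) (by positivity)] at j1
  rw [g3, g1, g2, ← add_div, ← add_div, div_mul_div_comm, hR, div_pow,
    div_eq_div_iff (by positivity) (by positivity)] at j2
  rw [g3, g1, g2, ← add_div, ← add_div, div_mul_div_comm, hS, div_pow,
    div_eq_div_iff (by positivity) (by positivity)] at j3
  rw [← pow_two] at j1 j2 j3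
  exact ⟨σ, hσ, by exact_mod_cast j1, by exact_mod_cast j2, by exact_mod_cast j3⟩

/-- Points of odd order whose `√x` has denominator exactly `w`. -/
def Lvl (w : ℤ) (P : (faceCurve A B).Point) : Prop := OddTorsion P ∧ ∃ a b c, Roots P w a b c

lemma eq_of_dvd_of_max {w w' : ℤ} {P : (faceCurve A B).Point}
    (hmax : ∀ Q : (faceCurve A B).Point, OddTorsion Q → ((xc Q).den : ℤ) ≤ w ^ 2) (hw : 0 < w) (hP : OddTorsion P)
    {a b c : ℤ} (h : Roots P w' a b c) (hd : w ∣ w') : w' = w := by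
  have h1 := hmax P hP
  rw [h.den] at h1
  have h2 : w' ≤ w := (pow_le_pow_iff_left₀ h.hw.le hw.le two_ne_zero).mp h1
  exact le_antisymm h2 (Int.le_of_dvd h.hw hd)

/-- If `w` is the largest denominator among the points of odd order, doubling preserves it: the
product formulas show that the denominator at `P` divides the one at `2 • P`. -/
lemma Roots.step {w a b c : ℤ} {P : (faceCurve A B).Point} (hA : A ≠ 0) (hB : B ≠ 0)
    (hmax : ∀ Q : (faceCurve A B).Point, OddTorsion Q → ((xc Q).den : ℤ) ≤ w ^ 2) (hP : OddTorsion P)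
    (h : Roots P w a b c) :
    ∃ σ a₂ b₂ c₂ : ℤ, σ ^ 2 = 1 ∧ Roots (2 • P) w a₂ b₂ c₂ ∧
      Step A B w a b c (σ * a₂) b₂ c₂ := by
  obtain ⟨w₂, a₂, b₂, c₂, h₂⟩ := hP.two.exists_roots
  obtain ⟨σ, hσ, pa, pb, pc⟩ := h.double hA hB hP.1 h₂
  have hd : w ∣ w₂ := by
    have h1 : w ^ 2 ∣ (a * w₂) ^ 2 := ⟨(σ * a₂ + b₂) * (σ * a₂ + c₂), by rw [mul_pow, ← pa]; ring⟩
    rw [Int.pow_dvd_pow_iff two_ne_zero] at h1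
    exact h.cop.symm.dvd_of_dvd_mul_left h1
  obtain rfl := eq_of_dvd_of_max hmax h.hw hP.two h₂ hd
  have hw2 : w₂ ^ 2 ≠ 0 := pow_ne_zero 2 h.hw.ne'
  have hσu : IsUnit σ := IsUnit.of_mul_eq_one σ (by rw [← pow_two, hσ])
  refine ⟨σ, a₂, b₂, c₂, hσ, h₂, h.hw, h.ha, h.hb, h.hc, h₂.hb, h₂.hc, h.eb, h.ec, ?_, ?_,
    mul_right_cancel₀ hw2 pa, mul_right_cancel₀ hw2 pb, mul_right_cancel₀ hw2 pc, h.cop, ?_⟩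
  · rw [mul_pow, hσ, one_mul, h₂.eb]
  · rw [mul_pow, hσ, one_mul, h₂.ec]
  · exact (isCoprime_mul_unit_left_left hσu _ _).mpr h₂.cop

lemma OddTorsion.xc_two_ne {P : (faceCurve A B).Point} (h : OddTorsion P) (h3 : 3 • P ≠ 0) :
    xc (2 • P) ≠ xc P := by
  intro hx
  rcases eq_or_eq_neg h.two.1 h.1 hx with h1 | h1
  · apply h.1
    rw [two_nsmul] at h1; simpa using h1
  · apply h3
    rw [show 3 = 2 + 1 by norm_num, add_smul, h1, one_smul, neg_add_cancel]

lemma Lvl.two {w : ℤ} {P : (faceCurve A B).Point} (hA : A ≠ 0) (hB : B ≠ 0)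
    (hmax : ∀ Q : (faceCurve A B).Point, OddTorsion Q → ((xc Q).den : ℤ) ≤ w ^ 2) (h : Lvl w P) :
    Lvl w (2 • P) := by
  obtain ⟨hP, a, b, c, hr⟩ := h
  obtain ⟨σ, a₂, b₂, c₂, -, h₂, -⟩ := hr.step hA hB hmax hP
  exact ⟨hP.two, a₂, b₂, c₂, h₂⟩

/-- Tripling preserves the largest denominator, by the formula for `x (2 P + P) · x (2 P - P)`. -/
lemma Lvl.three {w : ℤ} {P : (faceCurve A B).Point} (hA : A ≠ 0) (hB : B ≠ 0)
    (hmax : ∀ Q : (faceCurve A B).Point, OddTorsion Q → ((xc Q).den : ℤ) ≤ w ^ 2) (h : Lvl w P)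
    (h3 : 3 • P ≠ 0) : Lvl w (3 • P) := by
  obtain ⟨-, a₂, b₂, c₂, h₂⟩ := h.two hA hB hmax
  obtain ⟨hP, a, b, c, hr⟩ := h
  have hg := hP.three h3
  obtain ⟨w₃, a₃, b₃, c₃, h₃⟩ := hg.exists_roots
  have e := (xc_add_sub hP.two.1 hP.1 (hP.xc_two_ne h3)).2
  rw [show 2 • P + P = 3 • P by abel, show 2 • P - P = P by abel, h₃.hx, hr.hx, h₂.hx] at e
  have hne := hP.xc_two_ne h3
  rw [h₂.hx, hr.hx] at hne
  have hw : (w : ℚ) ≠ 0 := by exact_mod_cast hr.hw.ne'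
  have hw₃ : (w₃ : ℚ) ≠ 0 := by exact_mod_cast h₃.hw.ne'
  have hM : (a₂ : ℚ) ^ 2 - (a : ℚ) ^ 2 ≠ 0 := by
    intro h0; apply hne; rw [div_pow, div_pow, sub_eq_zero.mp h0]
  have e2 : (((a₂ : ℚ) / w) ^ 2 * ((a : ℚ) / w) ^ 2 - (A : ℚ) ^ 2 * (B : ℚ) ^ 2) /
      (((a₂ : ℚ) / w) ^ 2 - ((a : ℚ) / w) ^ 2) =
      ((a₂ : ℚ) ^ 2 * a ^ 2 - A ^ 2 * B ^ 2 * w ^ 4) / (w ^ 2 * (a₂ ^ 2 - a ^ 2)) := by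
    rw [div_pow, div_pow, ← sub_div]
    field_simp
  rw [e2, div_pow, div_pow, div_pow, div_mul_div_comm,
    div_eq_div_iff (by positivity) (by positivity)] at e
  have e3 : (a₃ * a * (w * (a₂ ^ 2 - a ^ 2))) ^ 2 * w ^ 2 =
      ((a₂ ^ 2 * a ^ 2 - A ^ 2 * B ^ 2 * w ^ 4) * w₃) ^ 2 * w ^ 2 := by
    have : (a₃ : ℚ) ^ 2 * a ^ 2 * (w ^ 2 * (a₂ ^ 2 - a ^ 2)) ^ 2 =
      (a₂ ^ 2 * a ^ 2 - A ^ 2 * B ^ 2 * w ^ 4) ^ 2 * (w₃ ^ 2 * w ^ 2) := e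
    have e' : a₃ ^ 2 * a ^ 2 * (w ^ 2 * (a₂ ^ 2 - a ^ 2)) ^ 2 =
      (a₂ ^ 2 * a ^ 2 - A ^ 2 * B ^ 2 * w ^ 4) ^ 2 * (w₃ ^ 2 * w ^ 2) := by exact_mod_cast this
    linear_combination e'
  have e4 := mul_right_cancel₀ (pow_ne_zero 2 hr.hw.ne') e3
  have hd : w ∣ w₃ := by
    have h1 : w ^ 2 ∣ ((a₂ ^ 2 * a ^ 2 - A ^ 2 * B ^ 2 * w ^ 4) * w₃) ^ 2 := by
      rw [← e4]; exact ⟨(a₃ * a * (a₂ ^ 2 - a ^ 2)) ^ 2, by ring⟩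
    rw [Int.pow_dvd_pow_iff two_ne_zero] at h1
    refine IsCoprime.dvd_of_dvd_mul_left ?_ h1
    have h2 : IsCoprime w (a₂ ^ 2 * a ^ 2) :=
      IsCoprime.mul_right h₂.cop.symm.pow_right hr.cop.symm.pow_right
    have h5 := h2.add_mul_left_right (-(A ^ 2 * B ^ 2 * w ^ 3))
    rwa [show a₂ ^ 2 * a ^ 2 - A ^ 2 * B ^ 2 * w ^ 4 =
      a₂ ^ 2 * a ^ 2 + w * -(A ^ 2 * B ^ 2 * w ^ 3) by ring]
  obtain rfl := eq_of_dvd_of_max hmax hr.hw hg h₃ hd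
  exact ⟨hg, a₃, b₃, c₃, h₃⟩

/-- Shape of the roots at the double `2 • P` of a point `P` of maximal level. -/
lemma Lvl.shape {w : ℤ} {P : (faceCurve A B).Point} (hA : A ≠ 0) (hB : B ≠ 0)
    (hAB : IsCoprime A B) (hAo : A % 2 = 1)
    (hmax : ∀ Q : (faceCurve A B).Point, OddTorsion Q → ((xc Q).den : ℤ) ≤ w ^ 2) (h : Lvl w P) :
    ∃ μ ν l a₂ b₂ c₂ : ℤ, 0 < μ ∧ 0 < ν ∧ 0 < l ∧
      Roots (2 • P) w (μ ^ 2 * (2 * ν ^ 2)) (μ ^ 2 * l) (2 * ν ^ 2 * l) ∧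
      Roots (2 • 2 • P) w a₂ b₂ c₂ ∧ b₂ + c₂ = l ^ 2 := by
  obtain ⟨hP, a₀, b₀, c₀, h₀⟩ := h
  obtain ⟨σ, a, b, c, hσ, h₁, s₁⟩ := h₀.step hA hB hmax hP
  obtain ⟨σ', a₂, b₂, c₂, -, h₂, s₂⟩ := h₁.step hA hB hmax hP.two
  obtain ⟨μ, ν, l, hμ, hν, hl, rfl, rfl, rfl, e⟩ := Step.shape hAB hAo hσ s₁ s₂
  exact ⟨μ, ν, l, a₂, b₂, c₂, hμ, hν, hl, h₁, h₂, e⟩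

lemma Roots.yc_eq {P : (faceCurve A B).Point} {w a b c : ℤ} (hP : P ≠ 0) (h : Roots P w a b c) :
    ∃ ε : ℚ, (ε = 1 ∨ ε = -1) ∧ yc P = ε * ((a : ℚ) * b * c / w ^ 3) := by
  have hw : (w : ℚ) ≠ 0 := by exact_mod_cast h.hw.ne'
  have e1 : (b : ℚ) ^ 2 = a ^ 2 + A ^ 2 * w ^ 2 := by exact_mod_cast h.eb
  have e2 : (c : ℚ) ^ 2 = a ^ 2 + B ^ 2 * w ^ 2 := by exact_mod_cast h.ec
  have : yc P ^ 2 = ((a : ℚ) * b * c / w ^ 3) ^ 2 := by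
    rw [curve_eq hP, h.hx, div_pow, div_pow, mul_pow, mul_pow, e1, e2]
    field_simp
  rcases sq_eq_sq_iff_eq_or_eq_neg.mp this with g | g
  · exact ⟨1, Or.inl rfl, by rw [g, one_mul]⟩
  · exact ⟨-1, Or.inr rfl, by rw [g, neg_one_mul]⟩

/-- There are no nonzero points of odd order. For a point `V` of odd order with the largest
denominator, `3 V = 0` leads to `μ² + ν²` and `μ² + 4ν²` both being squares, and `3 V ≠ 0` to a
nonzero difference of two fourth powers being a square up to sign. -/
lemma no_oddTorsion [Finite (faceCurve A B).Point] (hA : 0 < A) (hB : 0 < B)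
    (hAB : IsCoprime A B) (hAo : A % 2 = 1) (P₀ : (faceCurve A B).Point) (hP₀ : OddTorsion P₀) : False := by
  obtain ⟨V, hV, hVmax⟩ := Set.exists_max_image {P : (faceCurve A B).Point | OddTorsion P}
    (fun P => (xc P).den) (Set.toFinite _) ⟨P₀, hP₀⟩
  obtain ⟨w, a₀, b₀, c₀, h₀⟩ := OddTorsion.exists_roots hV
  have hmax : ∀ Q : (faceCurve A B).Point, OddTorsion Q → ((xc Q).den : ℤ) ≤ w ^ 2 := by
    intro Q hQ
    rw [← h₀.den]; exact_mod_cast hVmax Q hQ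
  have hL : Lvl w V := ⟨hV, a₀, b₀, c₀, h₀⟩
  have hA' := hA.ne'
  have hB' := hB.ne'
  obtain ⟨μ, ν, l, a₂, b₂, c₂, hμ, hν, hl, h₁, h₂, e⟩ := hL.shape hA' hB' hAB hAo hmax
  have hg2 := hL.1.two
  have hw := h₀.hw
  by_cases h3 : 3 • V = 0
  · -- `4 V = -2 V`, so the roots at `2 V` and `4 V` agree
    have hx : xc (2 • V) = xc (2 • 2 • V) := by
      rw [show 2 • 2 • V = 2 • 3 • V - 2 • V by abel, h3, nsmul_zero, zero_sub, xc_neg]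
    obtain ⟨-, rfl, rfl⟩ := h₁.unique h₂ hx
    have el : l = μ ^ 2 + 2 * ν ^ 2 := by
      apply mul_left_cancel₀ hl.ne'
      linear_combination -e
    have eb := h₁.eb
    have ec := h₁.ec
    obtain ⟨f, hf⟩ : ∃ v, μ ^ 2 + 4 * ν ^ 2 = v ^ 2 := by
      refine sq_of_sq_mul (x := μ ^ 3) (z := A * w) (by positivity) ?_
      rw [el] at eb; linear_combination eb
    obtain ⟨k, hk⟩ : ∃ v, μ ^ 2 + ν ^ 2 = v ^ 2 := by
      refine sq_of_sq_mul (x := 4 * ν ^ 3) (z := B * w) (by positivity) ?_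
      rw [el] at ec; linear_combination ec
    exact no_concordant _ μ ν k f rfl hμ.ne' hν.ne' hk hf
  · obtain ⟨μ', ν', l', -, -, -, hμ', hν', hl', h₁', -, -⟩ :=
      (hL.two hA' hB' hmax).shape hA' hB' hAB hAo hmax
    have hL3 := hL.three hA' hB' hmax h3
    obtain ⟨μ₃, ν₃, l₃, -, -, -, hμ₃, hν₃, hl₃, h₁₃, -, -⟩ :=
      hL3.shape hA' hB' hAB hAo hmax
    have h6 : 3 • 2 • V ≠ 0 := by
      rw [smul_comm]; exact hL3.1.two.1
    have hne := hg2.xc_two_ne h6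
    have d := (xc_add_sub hg2.two.1 hg2.1 hne).1
    obtain ⟨ε, hε, y1⟩ := h₁.yc_eq hg2.1
    obtain ⟨ε', hε', y2⟩ := h₁'.yc_eq hg2.two.1
    rw [show 2 • 2 • V + 2 • V = 2 • 3 • V by abel, show 2 • 2 • V - 2 • V = 2 • V by abel,
      h₁₃.hx, h₁.hx, y1, y2] at d
    have hwq : (w : ℚ) ≠ 0 := by exact_mod_cast hw.ne'
    have hD : xc (2 • 2 • V) - (((μ ^ 2 * (2 * ν ^ 2) : ℤ) : ℚ) / w) ^ 2 ≠ 0 := by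
      rw [← h₁.hx]; exact sub_ne_zero.mpr hne
    generalize xc (2 • 2 • V) - (((μ ^ 2 * (2 * ν ^ 2) : ℤ) : ℚ) / w) ^ 2 = D at d hD
    push_cast at d
    -- `z` is the rational number with `(μ₃ ν₃)⁴ - (μ ν)⁴ = ± z²`
    obtain ⟨z, hz⟩ : ∃ z : ℚ, z = (μ * μ * (2 * ν * ν) * l) * (μ' * μ' * (2 * ν' * ν') * l') /
      (w ^ 2 * D) := ⟨_, rfl⟩
    have hz0 : z ≠ 0 := by
      have : (μ : ℚ) ≠ 0 := by exact_mod_cast hμ.ne'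
      have : (ν : ℚ) ≠ 0 := by exact_mod_cast hν.ne'
      have : (l : ℚ) ≠ 0 := by exact_mod_cast hl.ne'
      have : (μ' : ℚ) ≠ 0 := by exact_mod_cast hμ'.ne'
      have : (ν' : ℚ) ≠ 0 := by exact_mod_cast hν'.ne'
      have : (l' : ℚ) ≠ 0 := by exact_mod_cast hl'.ne'
      rw [hz]; positivity
    have key : ((μ₃ : ℚ) * ν₃) ^ 4 - ((μ : ℚ) * ν) ^ 4 = -(ε * ε') * z ^ 2 := by
      rw [hz]
      field_simp at d ⊢
      linear_combination d
    have fin : ∀ x y : ℤ, y ≠ 0 → (x : ℚ) ^ 4 - (y : ℚ) ^ 4 = z ^ 2 → False := by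
      intro x y hy hxy
      have hs : IsSquare (((x ^ 4 - y ^ 4 : ℤ)) : ℚ) := ⟨z, by push_cast; rw [hxy, pow_two]⟩
      rw [Rat.isSquare_intCast_iff] at hs
      obtain ⟨v, hv⟩ := hs
      refine no_sub_fourth_eq_sq _ x y v rfl hy ?_ (by rw [hv, pow_two])
      rintro rfl
      apply hz0
      have : (((x ^ 4 - y ^ 4 : ℤ)) : ℚ) = 0 := by rw [hv]; norm_num
      push_cast at this
      rw [hxy] at this
      exact pow_eq_zero_iff two_ne_zero |>.mp this
    have hεε : ε * ε' = 1 ∨ ε * ε' = -1 := by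
      rcases hε with rfl | rfl <;> rcases hε' with rfl | rfl <;> norm_num
    rcases hεε with h | h
    · refine fin (μ * ν) (μ₃ * ν₃) (mul_pos hμ₃ hν₃).ne' ?_
      rw [h] at key; push_cast; linear_combination -key
    · refine fin (μ₃ * ν₃) (μ * ν) (mul_pos hμ hν).ne' ?_
      rw [h] at key; push_cast; linear_combination key

/-! ### From a brick to a point of odd order -/

/-- A point whose `x` is a nonzero square keeps that property under doubling: `x (2 P) = 0` would
make `A B` a square, hence `A` and `B` squares, against Fermat's theorem on `a⁴ + b⁴ = c²`. -/
lemma square_double {C : ℤ} (hA : 0 < A) (hB : 0 < B) (hAB : IsCoprime A B)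
    (hC : A ^ 2 + B ^ 2 = C ^ 2) {P : (faceCurve A B).Point} (hpos : 0 < xc P) (hsq : IsSquare (xc P)) :
    0 < xc (2 • P) ∧ IsSquare (xc (2 • P)) := by
  have hP : P ≠ 0 := by rintro rfl; exact lt_irrefl _ hpos
  have hAq : (0 : ℚ) < A := by exact_mod_cast hA
  have hBq : (0 : ℚ) < B := by exact_mod_cast hB
  have hy : yc P ≠ 0 := by
    intro h0
    have h1 := curve_eq hP
    rw [h0] at h1
    have : 0 < xc P * (xc P + (A : ℚ) ^ 2) * (xc P + (B : ℚ) ^ 2) := by positivity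
    rw [← h1] at this; simp at this
  rw [xc_double hy]
  refine ⟨?_, ⟨_, pow_two _⟩⟩
  have hne : xc P ^ 2 - (A : ℚ) ^ 2 * (B : ℚ) ^ 2 ≠ 0 := by
    intro h0
    have h1 : xc P = ((A * B : ℤ) : ℚ) := by
      refine (pow_left_inj₀ hpos.le (by push_cast; positivity) two_ne_zero).mp ?_
      push_cast; linear_combination h0
    rw [h1, Rat.isSquare_intCast_iff] at hsq
    obtain ⟨u, hu⟩ := hsq
    rw [← pow_two] at hu
    obtain ⟨a, ha⟩ := Int.sq_of_isCoprime hAB hu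
    obtain ⟨b, hb⟩ := Int.sq_of_isCoprime hAB.symm (by rw [mul_comm]; exact hu)
    have ha2 : A ^ 2 = a ^ 4 := by rcases ha with h | h <;> rw [h] <;> ring
    have hb2 : B ^ 2 = b ^ 4 := by rcases hb with h | h <;> rw [h] <;> ring
    refine not_fermat_42 (a := a) (b := b) (c := C) ?_ ?_ (by rw [← ha2, ← hb2, hC])
    · rintro rfl; simp at ha; exact hA.ne' ha
    · rintro rfl; simp at hb; exact hB.ne' hb
  positivity

/-- By `square_double` no `2 ^ k • P` vanishes, so the order of `P` is not a power of two. -/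
lemma exists_oddTorsion [Finite (faceCurve A B).Point] {C : ℤ} (hA : 0 < A) (hB : 0 < B)
    (hAB : IsCoprime A B) (hC : A ^ 2 + B ^ 2 = C ^ 2) (P : (faceCurve A B).Point)
    (hpos : 0 < xc P) (hsq : IsSquare (xc P)) : ∃ Q : (faceCurve A B).Point, OddTorsion Q := by
  have hk : ∀ k : ℕ, 0 < xc (2 ^ k • P) ∧ IsSquare (xc (2 ^ k • P)) := by
    intro k
    induction k with
    | zero => rw [pow_zero, one_smul]; exact ⟨hpos, hsq⟩
    | succ k ih =>
      rw [pow_succ', mul_smul]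
      exact square_double hA hB hAB hC ih.1 ih.2
  have ho : addOrderOf P ≠ 0 := (addOrderOf_pos P).ne'
  obtain ⟨k, m, ⟨j, rfl⟩, hkm⟩ := Nat.exists_eq_two_pow_mul_odd ho
  refine ⟨2 ^ k • P, ?_, j, ?_⟩
  · intro h0
    have := (hk k).1
    rw [h0] at this
    exact lt_irrefl _ this
  · rw [← mul_smul, mul_comm, ← hkm, addOrderOf_nsmul_eq_zero]

/-- If EF1 has only finitely many rational points, then no Euler brick has a face with
aspect ratio `(p²−q²) : 2pq`. -/
theorem no_euler_brick_with_face_ratio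
    (p q : ℤ) (hq : 0 < q) (hqp : q < p) (hcop : IsCoprime p q) (hpar : p % 2 ≠ q % 2)
    (h : (EF1 p q).Finite) :
    ¬ ∃ a b c : ℤ, 0 < a ∧ 0 < b ∧ 0 < c ∧
      IsSquare (a ^ 2 + b ^ 2) ∧ IsSquare (a ^ 2 + c ^ 2) ∧ IsSquare (b ^ 2 + c ^ 2) ∧
      a * (2 * p * q) = b * (p ^ 2 - q ^ 2) := by
  rintro ⟨a, b, c, ha, hb, hc, -, ⟨s, hs⟩, ⟨s', hs'⟩, hab⟩
  obtain ⟨A, hAdef⟩ : ∃ A : ℤ, A = p ^ 2 - q ^ 2 := ⟨_, rfl⟩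
  obtain ⟨B, hBdef⟩ : ∃ B : ℤ, B = 2 * p * q := ⟨_, rfl⟩
  have hp : 0 < p := hq.trans hqp
  have hA : 0 < A := by rw [hAdef]; nlinarith
  have hB : 0 < B := by rw [hBdef]; positivity
  have hC : A ^ 2 + B ^ 2 = (p ^ 2 + q ^ 2) ^ 2 := by rw [hAdef, hBdef]; ring
  have hAo : A % 2 = 1 := by
    have h1 : (p ^ 2 - q ^ 2) = (p - q) * (p + q) := by ring
    have h2 : (p - q) % 2 = 1 := by omega
    have h3 : (p + q) % 2 = 1 := by omega
    rw [hAdef, h1, Int.mul_emod, h2, h3]; rfl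
  have hAB : IsCoprime A B := by
    have h2 : IsCoprime A 2 := ⟨1, -(A / 2), by omega⟩
    have h3 : IsCoprime A p := by
      have h4 : IsCoprime (-(q ^ 2)) p := (hcop.symm.pow_left).neg_left
      have h5 := h4.add_mul_left_left p
      rwa [show -(q ^ 2) + p * p = A by rw [hAdef]; ring] at h5
    have h4 : IsCoprime A q := by
      have h4 : IsCoprime (p ^ 2) q := hcop.pow_left
      have h5 := h4.add_mul_left_left (-q)
      rwa [show p ^ 2 + q * -q = A by rw [hAdef]; ring] at h5
    rw [hBdef]
    exact (h2.mul_right h3).mul_right h4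
  have hABne : A ^ 2 ≠ B ^ 2 := by
    intro he
    have h1 : A = B := (pow_left_inj₀ hA.le hB.le two_ne_zero).mp he
    rw [hBdef] at h1
    have : A % 2 = 0 := by rw [h1, mul_assoc]; omega
    omega
  rw [← hAdef, ← hBdef] at hab
  -- the face is `k` times the primitive one
  obtain ⟨k, rfl⟩ : A ∣ a := hAB.dvd_of_dvd_mul_right ⟨b, by rw [hab]; ring⟩
  have hbk : b = B * k := by
    apply mul_left_cancel₀ hA.ne'
    linear_combination -hab
  subst hbk
  have hk : 0 < k := (mul_pos_iff_of_pos_left hA).mp ha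
  have hkq : (0 : ℚ) < k := by exact_mod_cast hk
  have hcq : (0 : ℚ) < c := by exact_mod_cast hc
  have hfin : Finite (faceCurve A B).Point := by
    apply finite_points
    convert h using 1
    ext P
    simp only [EF1, Set.mem_ofPred_eq, hAdef, hBdef]
    push_cast
    constructor <;> intro h <;> linear_combination h
  have e1 : ((A : ℚ) * k) ^ 2 + (c : ℚ) ^ 2 = s * s := by exact_mod_cast hs
  have e2 : ((B : ℚ) * k) ^ 2 + (c : ℚ) ^ 2 = s' * s' := by exact_mod_cast hs'
  obtain ⟨P, -, hx, -⟩ := exists_point (A := A) (B := B) hA.ne' hB.ne' hABne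
    (x := ((c : ℚ) / k) ^ 2) (y := c / k * (s / k) * (s' / k)) (by
      have f1 : ((c : ℚ) / k) ^ 2 + (A : ℚ) ^ 2 = (s / k) ^ 2 := by
        rw [div_pow, div_pow, pow_two (s : ℚ), ← e1]; field_simp; ring
      have f2 : ((c : ℚ) / k) ^ 2 + (B : ℚ) ^ 2 = (s' / k) ^ 2 := by
        rw [div_pow, div_pow, pow_two (s' : ℚ), ← e2]; field_simp; ring
      rw [f1, f2]; ring)
  obtain ⟨Q, hQ⟩ := exists_oddTorsion hA hB hAB hC P (by rw [hx]; positivity)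
    ⟨(c : ℚ) / k, by rw [hx, pow_two]⟩
  exact no_oddTorsion hA hB hAB hAo Q hQ
end

section
/- Let (p,q) be admissible. If the curve EF2: y² = x³ + ((p²−q²)⁴+16p⁴q⁴)x² + 16p⁴q⁴(p²−q²)⁴x has only finitely many rational points, then there do not exist positive integers u, v, W and a squarefree positive integer M such that u·2pq = v·(p²−q²), u²+v² is a perfect square, and W, M·u²+W, M·v²+W, and M·(u²+v²)+W are all perfect squares. (The case M = 1 says no perfect cuboid has a face with aspect ratio (p²−q²):2pq; the case M > 1 says no F-BPC has a Pythagorean face with that aspect ratio.) -/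
/-!
Put `a = p² - q²` (odd), `b = 2pq`, `c = p² + q²`, so that EF2 is `y² = x(x + a⁴)(x + b⁴)`.

Suppose `W = w²`, `Mu² + W = f²`, `Mv² + W = g²` and `M(u² + v²) + W = k²`. Because `ub = va`, the
rationals `X = abk/w`, `Y = acg/w`, `Z = bcf/w` satisfy `X² + a⁴ = Y²` and `X² + b⁴ = Z²`, and
`X² > a²b²`. Hence `(X², XYZ)` is a rational point of EF2.

*Integrality.* If EF2 has finitely many rational points, all of them have integral `x`-coordinate
(`integral_of_finite`): if a prime `r` divided a denominator, the point would lie in the formal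
group at `r`, and its multiples by powers of `r` would be infinitely many distinct points. This is
made explicit in `deeper_point`, by computing the `r`-th multiple in the coordinates `x/y`, `1/y`.
Translating by the point `(0, 0)` of order two shows moreover that `X` divides `a²b²`
(`integral_triple`).

*Doubling.* The doubled point also has all three of `x`, `x + a⁴`, `x + b⁴` square, with
`X₂ = (X⁴ - a⁴b⁴) / (2XYZ)`, so `X₂` too is a nonzero integer dividing `a²b²`. Comparing valuations,
`X₂` has even valuation at every odd prime (`even_val_odd_prime`) and odd valuation at `2`
(`odd_val_two`). Thus `X₂ = ±2D²`, and `a⁴ + 4D⁴` is a square, which descent excludes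
(`fermat_descent`).
-/

/-- The elliptic curve EF2: `y² = x³ + ((p²−q²)⁴+16p⁴q⁴)x² + 16p⁴q⁴(p²−q²)⁴x`, as a set of
rational points. -/
def EF2 (p q : ℤ) : Set (ℚ × ℚ) :=
  {P | P.2 ^ 2 = P.1 ^ 3 + (((p : ℚ) ^ 2 - (q : ℚ) ^ 2) ^ 4 + 16 * (p : ℚ) ^ 4 * (q : ℚ) ^ 4) * P.1 ^ 2 +
    16 * (p : ℚ) ^ 4 * (q : ℚ) ^ 4 * ((p : ℚ) ^ 2 - (q : ℚ) ^ 2) ^ 4 * P.1}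

/-! ### Points with non-integral coordinates -/

/-- Chord addition near the origin. In the coordinates `z = x / y`, `w = 1 / y` the curve
`y² = x³ + c2 x² + c4 x` reads `w = z³ + c2 z² w + c4 z w²`; the equations below are this one after
the scaling `z = s Z`, `w = s³ W`. If every `1 + s t` is a unit, then any two points have a sum,
and its `Z`-coordinate is `Z1 + Z2` up to a multiple of `s²`. The slope `l` is written in a form
without the denominator `Z2 - Z1`, so tangents need no separate treatment. -/
lemma chord_step {A : Type*} [CommRing A] (c2 c4 s : A) (hu : ∀ t, IsUnit (1 + s * t))
    {Z1 W1 Z2 W2 : A} (h1 : W1 = Z1 ^ 3 + c2 * s ^ 2 * Z1 ^ 2 * W1 + c4 * s ^ 4 * Z1 * W1 ^ 2)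
    (h2 : W2 = Z2 ^ 3 + c2 * s ^ 2 * Z2 ^ 2 * W2 + c4 * s ^ 4 * Z2 * W2 ^ 2) :
    ∃ Z W T : A, W = Z ^ 3 + c2 * s ^ 2 * Z ^ 2 * W + c4 * s ^ 4 * Z * W ^ 2 ∧
      Z = Z1 + Z2 + s ^ 2 * T := by
  obtain ⟨i, hi⟩ := (hu (-(c2 * s * Z2 ^ 2) - c4 * s ^ 3 * Z2 * (W1 + W2))).exists_right_inv
  obtain ⟨l, hl⟩ : ∃ l, l = (Z1 ^ 2 + Z1 * Z2 + Z2 ^ 2 + c2 * s ^ 2 * W1 * (Z1 + Z2)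
    + c4 * s ^ 4 * W1 ^ 2) * i := ⟨_, rfl⟩
  obtain ⟨n, hn⟩ : ∃ n, n = W1 - l * Z1 := ⟨_, rfl⟩
  obtain ⟨j, hj⟩ := (hu (c2 * s * l + c4 * s ^ 3 * l ^ 2)).exists_right_inv
  obtain ⟨T, hT⟩ : ∃ T, T = (c2 * n + 2 * c4 * s ^ 2 * l * n) * j := ⟨_, rfl⟩
  have hlD : l * (1 - c2 * s ^ 2 * Z2 ^ 2 - c4 * s ^ 4 * Z2 * (W1 + W2)) =
      Z1 ^ 2 + Z1 * Z2 + Z2 ^ 2 + c2 * s ^ 2 * W1 * (Z1 + Z2) + c4 * s ^ 4 * W1 ^ 2 := by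
    rw [hl]
    linear_combination (Z1 ^ 2 + Z1 * Z2 + Z2 ^ 2 + c2 * s ^ 2 * W1 * (Z1 + Z2)
      + c4 * s ^ 4 * W1 ^ 2) * hi
  have hTL : T * (1 + c2 * s ^ 2 * l + c4 * s ^ 4 * l ^ 2) = c2 * n + 2 * c4 * s ^ 2 * l * n := by
    rw [hT]
    linear_combination (c2 * n + 2 * c4 * s ^ 2 * l * n) * hj
  have hW1 : W1 = l * Z1 + n := by rw [hn]; ring
  have hW2 : W2 = l * Z2 + n := by
    have h0 : (1 - c2 * s ^ 2 * Z2 ^ 2 - c4 * s ^ 4 * Z2 * (W1 + W2)) *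
        (W2 - W1 - l * (Z2 - Z1)) = 0 := by
      linear_combination h2 - h1 - (Z2 - Z1) * hlD
    linear_combination i * h0 - (W2 - W1 - l * (Z2 - Z1)) * hi + hW1
  subst hW2
  subst hW1
  refine ⟨Z1 + Z2 + s ^ 2 * T, l * (Z1 + Z2 + s ^ 2 * T) - n, T, ?_, rfl⟩
  obtain ⟨t, ht⟩ : ∃ t, t = -(Z1 + Z2 + s ^ 2 * T) := ⟨_, rfl⟩
  have hZ : Z1 + Z2 + s ^ 2 * T = -t := by rw [ht]; ring
  rw [hZ]
  -- Newton form of the cubic with nodes `Z1`, `Z2`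
  linear_combination -h1 - (t - Z1) * hlD
    + (t - Z1) * (t - Z2) * ((1 + c2 * s ^ 2 * l + c4 * s ^ 4 * l ^ 2) * ht - s ^ 2 * hTL)

/-- The localization of `ℤ` at the prime `r`, as the subring of `r`-integral rationals. -/
def locRing (r : ℕ) [Fact r.Prime] : Subring ℚ where
  carrier := {x | padicNorm r x ≤ 1}
  mul_mem' {x y} hx hy := by
    simp only [Set.mem_ofPred_eq, padicNorm.mul] at *
    exact mul_le_one₀ hx (padicNorm.nonneg _) hy
  one_mem' := by simp
  add_mem' {x y} hx hy := padicNorm.nonarchimedean.trans (max_le hx hy)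
  zero_mem' := by simp
  neg_mem' {x} hx := by simpa [padicNorm.neg] using hx

lemma norm_one_add (r : ℕ) [Fact r.Prime] {t : ℚ} (ht : padicNorm r t < 1) :
    padicNorm r (1 + t) = 1 := by
  rw [padicNorm.add_eq_max_of_ne (by simpa using ht.ne'), padicNorm.one, max_eq_left ht.le]

lemma isUnit_one_add (r : ℕ) [Fact r.Prime] (s : locRing r) (hs : padicNorm r (s : ℚ) < 1)
    (t : locRing r) : IsUnit (1 + s * t) := by
  have h1 : padicNorm r (1 + (s : ℚ) * t) = 1 := by
    apply norm_one_add
    rw [padicNorm.mul]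
    exact mul_lt_one_of_nonneg_of_lt_one_left (padicNorm.nonneg _) hs t.2
  have hne : 1 + (s : ℚ) * t ≠ 0 := fun h0 ↦ by simp [h0] at h1
  refine IsUnit.of_mul_eq_one (⟨(1 + (s : ℚ) * t)⁻¹, ?_⟩ : locRing r) (Subtype.ext ?_)
  · change padicNorm r _ ≤ 1
    have := padicNorm.mul (p := r) (1 + (s : ℚ) * t) (1 + (s : ℚ) * t)⁻¹
    rw [mul_inv_cancel₀ hne, h1, padicNorm.one, one_mul] at this
    exact this.symm.le
  · push_cast
    exact mul_inv_cancel₀ hne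

/-- The `m`-th multiple of the point `(Z, W) = (1, W1)` has `Z`-coordinate congruent to `m`
modulo `s²`. -/
lemma multiples {A : Type*} [CommRing A] (c2 c4 s : A) (hu : ∀ t, IsUnit (1 + s * t))
    {W1 : A} (h1 : W1 = 1 + c2 * s ^ 2 * W1 + c4 * s ^ 4 * W1 ^ 2) (m : ℕ) :
    ∃ Z W T : A, W = Z ^ 3 + c2 * s ^ 2 * Z ^ 2 * W + c4 * s ^ 4 * Z * W ^ 2 ∧
      Z = m + s ^ 2 * T := by
  induction m with
  | zero => exact ⟨0, 0, 0, by ring, by simp⟩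
  | succ m ih =>
    obtain ⟨Z, W, T, h, hZ⟩ := ih
    obtain ⟨Z', W', T', h', hZ'⟩ := chord_step c2 c4 s hu (Z2 := 1) (W2 := W1) h
      (by linear_combination h1)
    exact ⟨Z', W', T + T', h', by rw [hZ', hZ]; push_cast; ring⟩

/-- A rational point whose `x`-coordinate is not `r`-integral has a multiple, namely the `r`-th,
which again has this property and whose parameter `x / y` is `r`-adically strictly smaller: with
`s = x / y`, the parameter of the multiple is `s Z` with `Z ≡ r` modulo `s²`. -/
lemma deeper_point (r : ℕ) [Fact r.Prime] (c2 c4 : ℤ) {x y : ℚ}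
    (h : y ^ 2 = x ^ 3 + c2 * x ^ 2 + c4 * x) (hx : 1 < padicNorm r x) :
    ∃ x' y' : ℚ, y' ^ 2 = x' ^ 3 + c2 * x' ^ 2 + c4 * x' ∧ 1 < padicNorm r x' ∧
      padicNorm r (x' / y') < padicNorm r (x / y) := by
  have hr : r.Prime := Fact.out
  have hr1 : (1 : ℚ) < r := by exact_mod_cast hr.one_lt
  have hx0 : x ≠ 0 := fun h0 ↦ by norm_num [h0] at hx
  have hxinv : padicNorm r x⁻¹ < 1 := by
    have := padicNorm.mul (p := r) x x⁻¹
    rw [mul_inv_cancel₀ hx0, padicNorm.one] at this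
    have h0 := padicNorm.nonneg (p := r) x⁻¹
    nlinarith
  let xi : locRing r := ⟨x⁻¹, hxinv.le⟩
  -- the unit `y² / x³`
  have he : y ^ 2 / x ^ 3 = 1 + x⁻¹ * (c2 + c4 * x⁻¹) := by
    rw [h]; field_simp; ring
  have hn : padicNorm r (y ^ 2 / x ^ 3) = 1 := by
    rw [he]
    apply norm_one_add
    rw [padicNorm.mul]
    exact mul_lt_one_of_nonneg_of_lt_one_left (padicNorm.nonneg _) hxinv
      ((c2 : locRing r) + c4 * xi).2
  have hy0 : y ≠ 0 := fun h0 ↦ by simp [h0] at hn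
  have hs2 : padicNorm r (x / y) ^ 2 < 1 := by
    have e : x⁻¹ = (x / y) * (x / y) * (y ^ 2 / x ^ 3) := by field_simp
    rw [e, padicNorm.mul, padicNorm.mul, hn] at hxinv
    nlinarith
  have hs : padicNorm r (x / y) < 1 := by
    have := padicNorm.nonneg (p := r) (x / y)
    nlinarith
  let s : locRing r := ⟨x / y, hs.le⟩
  let W1 : locRing r := ⟨y ^ 2 / x ^ 3, hn.le⟩
  have hs0 : x / y ≠ 0 := div_ne_zero hx0 hy0
  have h1 : W1 = 1 + c2 * s ^ 2 * W1 + c4 * s ^ 4 * W1 ^ 2 := by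
    apply Subtype.ext
    change y ^ 2 / x ^ 3 = 1 + c2 * (x / y) ^ 2 * (y ^ 2 / x ^ 3) +
      c4 * (x / y) ^ 4 * (y ^ 2 / x ^ 3) ^ 2
    field_simp
    linear_combination h
  obtain ⟨Z, W, T, hc, hZ⟩ := multiples (c2 : locRing r) c4 s
    (isUnit_one_add r s hs) h1 r
  have hc' := congrArg (Subtype.val) hc
  have hZ' := congrArg (Subtype.val) hZ
  push_cast at hc' hZ'
  change (W : ℚ) = Z ^ 3 + c2 * (x / y) ^ 2 * Z ^ 2 * W + c4 * (x / y) ^ 4 * Z * W ^ 2 at hc'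
  change (Z : ℚ) = r + (x / y) ^ 2 * T at hZ'
  have hsr : padicNorm r (x / y) ≤ (r : ℚ)⁻¹ := by
    obtain ⟨k, hk⟩ := padicNorm.values_discrete (p := r) hs0
    rw [hk] at hs ⊢
    have hk1 : -k ≤ -1 := by
      by_contra hcon
      exact absurd (one_le_zpow₀ hr1.le (by omega : 0 ≤ -k)) (not_le.mpr hs)
    simpa using zpow_le_zpow_right₀ hr1.le hk1
  have hri : 0 < (r : ℚ)⁻¹ := by positivity
  have hri1 : (r : ℚ)⁻¹ < 1 := inv_lt_one_of_one_lt₀ hr1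
  have hnr : padicNorm r (r : ℚ) = (r : ℚ)⁻¹ := padicNorm.padicNorm_p_of_prime
  have hsm : padicNorm r ((x / y) ^ 2 * T) < padicNorm r (r : ℚ) := by
    have hT1 : padicNorm r (T : ℚ) ≤ 1 := T.2
    have hT0 := padicNorm.nonneg (p := r) (T : ℚ)
    have hp0 := padicNorm.nonneg (p := r) (x / y)
    rw [hnr, pow_two, padicNorm.mul, padicNorm.mul]
    calc _ ≤ ((r : ℚ)⁻¹ * (r : ℚ)⁻¹) * 1 := by gcongr
      _ < _ := by nlinarith
  have hZn : padicNorm r (Z : ℚ) = (r : ℚ)⁻¹ := by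
    rw [hZ', padicNorm.add_eq_max_of_ne hsm.ne', max_eq_left hsm.le, hnr]
  have hZ0 : (Z : ℚ) ≠ 0 := fun h0 ↦ by
    rw [h0, padicNorm.zero] at hZn
    exact hri.ne hZn
  have hW0 : (W : ℚ) ≠ 0 := fun h0 ↦ by
    rw [h0] at hc'
    exact hZ0 (pow_eq_zero_iff three_ne_zero |>.mp (by linear_combination -hc'))
  obtain ⟨S, hS⟩ : ∃ S, S = x / y := ⟨_, rfl⟩
  rw [← hS] at hc' hs0 hs hsr ⊢
  have hcurve : (1 / (S ^ 3 * W)) ^ 2 =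
      (Z / (S ^ 2 * W)) ^ 3 + c2 * (Z / (S ^ 2 * W)) ^ 2 + c4 * (Z / (S ^ 2 * W) : ℚ) := by
    field_simp
    linear_combination hc'
  refine ⟨Z / (S ^ 2 * W), 1 / (S ^ 3 * W), hcurve, ?_, ?_⟩
  · by_contra hle
    let X' : locRing r := ⟨Z / (S ^ 2 * W), not_lt.mp hle⟩
    have hy2 : padicNorm r ((1 / (S ^ 3 * W)) ^ 2) ≤ 1 := by
      rw [hcurve]
      exact (X' ^ 3 + c2 * X' ^ 2 + c4 * X').2
    have hw : padicNorm r ((S ^ 3 * W) ^ 2) < 1 := by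
      have e : (S ^ 3 * (W : ℚ)) ^ 2 = S * (S ^ 5 * W ^ 2) := by ring
      rw [e, padicNorm.mul]
      have hm : S ^ 5 * (W : ℚ) ^ 2 ∈ locRing r :=
        mul_mem (pow_mem (show S ∈ locRing r from hs.le) 5) (pow_mem W.2 2)
      exact mul_lt_one_of_nonneg_of_lt_one_left (padicNorm.nonneg _) hs hm
    have hone : padicNorm r ((S ^ 3 * W) ^ 2 * (1 / (S ^ 3 * W)) ^ 2) = 1 := by
      rw [← mul_pow, mul_one_div_cancel (mul_ne_zero (pow_ne_zero 3 hs0) hW0), one_pow,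
        padicNorm.one]
    rw [padicNorm.mul] at hone
    exact absurd hone
      (mul_lt_one_of_nonneg_of_lt_one_left (padicNorm.nonneg _) hw hy2).ne
  · have e : (Z / (S ^ 2 * W)) / (1 / (S ^ 3 * W)) = (S * Z : ℚ) := by field_simp
    rw [e, padicNorm.mul, hZn]
    have : 0 < padicNorm r S := lt_of_le_of_ne (padicNorm.nonneg _) (padicNorm.nonzero hs0).symm
    nlinarith

/-- A curve `y² = x³ + c2 x² + c4 x` with finitely many rational points has integral
`x`-coordinates only: `deeper_point` leaves no room for a prime in a denominator. -/
lemma integral_of_finite (c2 c4 : ℤ)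
    (hfin : {P : ℚ × ℚ | P.2 ^ 2 = P.1 ^ 3 + c2 * P.1 ^ 2 + c4 * P.1}.Finite) {x y : ℚ}
    (h : y ^ 2 = x ^ 3 + c2 * x ^ 2 + c4 * x) : ∃ n : ℤ, x = n := by
  suffices hden : x.den = 1 from ⟨x.num, ((Rat.den_eq_one_iff x).mp hden).symm⟩
  by_contra hden
  obtain ⟨r, hr, hrd⟩ := Nat.exists_prime_and_dvd hden
  have : Fact r.Prime := ⟨hr⟩
  have hx : 1 < padicNorm r x := by
    have hnum : padicNorm r x.num = 1 := by
      rw [padicNorm.int_eq_one_iff]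
      intro hd
      exact hr.one_lt.ne' (Nat.dvd_one.mp (x.reduced ▸
        Nat.dvd_gcd (Int.natCast_dvd.mp hd) hrd))
    have hd : padicNorm r (x.den : ℚ) < 1 := (padicNorm.nat_lt_one_iff _).mpr hrd
    have hd0 : 0 < padicNorm r (x.den : ℚ) :=
      lt_of_le_of_ne (padicNorm.nonneg _)
        (padicNorm.nonzero (by exact_mod_cast x.den_ne_zero)).symm
    rw [← Rat.num_div_den x, padicNorm.div, hnum]
    exact (one_lt_div hd0).mpr hd
  -- a point of the formal group at `r` closest to the origin
  obtain ⟨P, ⟨hP, hP1⟩, hmin⟩ := Set.exists_min_image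
    {P : ℚ × ℚ | P.2 ^ 2 = P.1 ^ 3 + c2 * P.1 ^ 2 + c4 * P.1 ∧ 1 < padicNorm r P.1}
    (fun P ↦ padicNorm r (P.1 / P.2)) (hfin.subset fun P hP ↦ hP.1) ⟨(x, y), h, hx⟩
  obtain ⟨x', y', h', hx', hlt⟩ := deeper_point r c2 c4 hP hP1
  exact absurd (hmin (x', y') ⟨h', hx'⟩) (not_le.mpr hlt)

/-! ### Fermat descent -/

lemma sq_of_coprime_mul {m n D : ℤ} (hg : Int.gcd m n = 1) (h : m * n = D ^ 2) (hm : 0 < m) :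
    ∃ i j : ℤ, m = i ^ 2 ∧ n = j ^ 2 := by
  have hn : 0 ≤ n := by
    by_contra hn
    have := mul_neg_of_pos_of_neg hm (not_le.mp hn)
    nlinarith [sq_nonneg D]
  obtain ⟨i, hi⟩ := Int.sq_of_gcd_eq_one hg h
  obtain ⟨j, hj⟩ := Int.sq_of_gcd_eq_one (by rwa [Int.gcd_comm]) ((mul_comm n m).trans h)
  refine ⟨i, j, ?_, ?_⟩
  · rcases hi with hi | hi
    · exact hi
    · nlinarith [sq_nonneg i]
  · rcases hj with hj | hj
    · exact hj
    · nlinarith [sq_nonneg j]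

/-- The equation `a⁴ + 4 D⁴ = Y²` has no solution with `a` odd and `D ≠ 0`, by infinite descent on
`|Y|`. When `a` and `D` are coprime, parametrizing the Pythagorean triple `(a², 2D², Y)` by
`m = i²`, `n = j²` gives a second triple `(a, j², i²)`; its parameters are a square and twice a
square, and produce a solution with `i` in place of `Y`. -/
lemma fermat_descent (N : ℕ) : ∀ a D Y : ℤ, Y.natAbs ≤ N → a % 2 = 1 → D ≠ 0 →
    a ^ 4 + 4 * D ^ 4 ≠ Y ^ 2 := by
  induction N with
  | zero =>
    intro a D Y hY ha hD h
    obtain rfl : Y = 0 := by omega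
    have : 0 < D ^ 4 := by positivity
    nlinarith [sq_nonneg (a ^ 2)]
  | succ N ih =>
    intro a D Y hY ha hD h
    wlog hY0 : 0 < Y generalizing Y
    · have hne : Y ≠ 0 := by
        rintro rfl
        have : 0 < D ^ 4 := by positivity
        nlinarith [sq_nonneg (a ^ 2)]
      exact this (-Y) (by simpa using hY) (by rw [h]; ring) (by omega)
    by_cases hg : Int.gcd a D = 1
    · have hcop : IsCoprime a D := Int.isCoprime_iff_gcd_eq_one.mpr hg
      have hcop2 : IsCoprime a 2 := by
        refine ⟨1, -(a / 2), ?_⟩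
        omega
      have ht : PythagoreanTriple (a ^ 2) (2 * D ^ 2) Y := by
        unfold PythagoreanTriple
        linear_combination h
      obtain ⟨m, n, e1, e2, e3, hmn, -, hm0⟩ := ht.coprime_classification'
        (Int.isCoprime_iff_gcd_eq_one.mp ((hcop2.pow_left).mul_right hcop.pow))
        (by rw [pow_two, Int.mul_emod, ha]; rfl) hY0
      have hmnD : m * n = D ^ 2 := by linarith
      have hmpos : 0 < m := by
        rcases hm0.lt_or_eq with h0 | rfl
        · exact h0
        · exact absurd (by simpa using hmnD.symm) hD
      obtain ⟨i, j, hi, hj⟩ := sq_of_coprime_mul hmn hmnD hmpos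
      wlog hi0 : 0 < i generalizing i
      · have hne : i ≠ 0 := by rintro rfl; simp at hi; omega
        exact this (-i) (by rw [hi]; ring) (by omega)
      have hj0 : j ≠ 0 := by
        rintro rfl
        rw [hj] at hmnD
        exact hD (by simpa using hmnD.symm)
      have hijc : IsCoprime i j := by
        have := Int.isCoprime_iff_gcd_eq_one.mpr hmn
        rw [hi, hj] at this
        exact (IsCoprime.pow_iff two_pos two_pos).mp this
      have ht2 : PythagoreanTriple a (j ^ 2) (i ^ 2) := by
        unfold PythagoreanTriple
        rw [hi, hj] at e1
        linear_combination e1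
      have haj : IsCoprime a (j ^ 2) := by
        have hcopD : IsCoprime a (D ^ 2) := hcop.pow_right
        rw [← hmnD, hj] at hcopD
        exact hcopD.of_mul_right_right
      obtain ⟨s, t, f1, f2, f3, hst, hpar, hs0⟩ := ht2.coprime_classification'
        (Int.isCoprime_iff_gcd_eq_one.mp haj) ha (by positivity)
      have hspos : 0 < s := by
        rcases hs0.lt_or_eq with h0 | rfl
        · exact h0
        · exact absurd (by simpa using f2) hj0
      have htpos : 0 < t := by
        have : 0 < j ^ 2 := by positivity
        by_contra hcon
        nlinarith
      -- the next, smaller solution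
      have hlt : i.natAbs ≤ N := by
        have : i < Y := by
          rw [e3, hi, hj]
          have h4 : 0 < (j ^ 2) ^ 2 := by positivity
          have h5 : i ≤ (i ^ 2) ^ 2 := by
            have : 1 ≤ i := hi0
            nlinarith [sq_nonneg (i ^ 2 - 1), sq_nonneg i, mul_self_nonneg (i - 1)]
          linarith
        omega
      have hjev : j % 2 = 0 := by
        have : j ^ 2 % 2 = 0 := by rw [f2, mul_assoc]; omega
        rcases Int.emod_two_eq_zero_or_one j with h0 | h0
        · exact h0
        · rw [pow_two, Int.mul_emod, h0] at this; norm_num at this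
      obtain ⟨k, rfl⟩ : ∃ k, j = 2 * k := ⟨j / 2, by omega⟩
      have hk0 : k ≠ 0 := by rintro rfl; simp at hj0
      have key : ∀ s t : ℤ, 0 < s → Int.gcd s t = 1 → 2 * k ^ 2 = s * t → s % 2 = 1 →
          t % 2 = 0 → i ^ 2 = s ^ 2 + t ^ 2 → False := by
        intro s t hs hst hk hs2 ht2 hsum
        obtain ⟨t', rfl⟩ : ∃ t', t = 2 * t' := ⟨t / 2, by omega⟩
        have hc : Int.gcd s t' = 1 :=
          Int.isCoprime_iff_gcd_eq_one.mp (Int.isCoprime_iff_gcd_eq_one.mpr hst).of_mul_right_right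
        obtain ⟨g, l, hgs, hlt'⟩ := sq_of_coprime_mul (D := k) hc (by linarith) hs
        refine ih g l i hlt ?_ ?_ ?_
        · rcases Int.emod_two_eq_zero_or_one g with h0 | h0
          · rw [hgs, pow_two, Int.mul_emod, h0] at hs2; norm_num at hs2
          · exact h0
        · rintro rfl
          rw [hlt'] at hk
          exact hk0 (by simpa using hk)
        · rw [hsum, hgs, hlt']; ring
      rcases hpar with ⟨h0, h1⟩ | ⟨h0, h1⟩
      · exact key t s htpos (by rwa [Int.gcd_comm]) (by linarith) h1 h0 (by linarith)
      · exact key s t hspos hst (by linarith) h0 h1 (by linarith)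
    · -- remove a common factor
      have hg0 : Int.gcd a D ≠ 0 := fun h0 ↦ hD (Int.gcd_eq_zero_iff.mp h0).2
      obtain ⟨a', ha'⟩ := Int.gcd_dvd_left (a := a) (b := D)
      obtain ⟨D', hD'⟩ := Int.gcd_dvd_right (a := a) (b := D)
      obtain ⟨g, hgdef⟩ : ∃ g : ℤ, g = (Int.gcd a D : ℤ) := ⟨_, rfl⟩
      rw [← hgdef] at ha' hD'
      have hg2 : 2 ≤ g := by omega
      have hdvd : g ^ 2 ∣ Y := by
        rw [← Int.pow_dvd_pow_iff two_ne_zero, ← h]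
        exact ⟨a' ^ 4 + 4 * D' ^ 4, by rw [ha', hD']; ring⟩
      obtain ⟨Y', rfl⟩ := hdvd
      have hg2' : 0 < g ^ 2 := by positivity
      have hY' : 0 < Y' := by
        by_contra hcon
        nlinarith
      refine ih a' D' Y' ?_ ?_ ?_ ?_
      · have : Y' < g ^ 2 * Y' := by nlinarith
        omega
      · rcases Int.emod_two_eq_zero_or_one a' with h0 | h0
        · rw [ha', Int.mul_emod, h0] at ha; norm_num at ha
        · exact h0
      · rintro rfl
        exact hD (by rw [hD', mul_zero])
      · have hg4 : g ^ 4 ≠ 0 := by positivity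
        apply mul_left_cancel₀ hg4
        rw [ha', hD'] at h
        linear_combination h

lemma isSquare_of_even_val {n : ℕ} (hn : n ≠ 0)
    (h : ∀ r : ℕ, r.Prime → Even (padicValNat r n)) : IsSquare n := by
  obtain ⟨u, v, huv, hu⟩ := Nat.sq_mul_squarefree n
  have hu1 : u = 1 := by
    by_contra hne
    obtain ⟨r, hr, hru⟩ := Nat.exists_prime_and_dvd hne
    have : Fact r.Prime := ⟨hr⟩
    have hv0 : v ≠ 0 := by rintro rfl; simp at huv; omega
    have hr2 := h r hr
    have h1 : padicValNat r u = 1 := by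
      have h2 := hu.natFactorization_le_one r
      rw [Nat.factorization_def _ hr] at h2
      have := one_le_padicValNat_of_dvd hu.ne_zero hru
      omega
    rw [← huv, padicValNat.mul (by positivity) hu.ne_zero, padicValNat.pow, h1] at hr2
    grind
  exact ⟨v, by rw [← huv, hu1]; ring⟩

/-! ### Valuations of the doubled point -/

lemma val_add (r : ℕ) [Fact r.Prime] {x y : ℤ} (hx : x ≠ 0) (hy : y ≠ 0) (hxy : x + y ≠ 0) :
    min (padicValRat r x) (padicValRat r y) ≤ padicValRat r (x + y : ℤ) ∧
      (padicValRat r x ≠ padicValRat r y →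
        padicValRat r (x + y : ℤ) = min (padicValRat r x) (padicValRat r y)) := by
  have h0 : (x : ℚ) + y ≠ 0 := by exact_mod_cast hxy
  push_cast
  exact ⟨padicValRat.min_le_padicValRat_add h0, fun h ↦
    padicValRat.add_eq_min h0 (by exact_mod_cast hx) (by exact_mod_cast hy) h⟩

lemma val_mul (r : ℕ) [Fact r.Prime] {x y : ℤ} (hx : x ≠ 0) (hy : y ≠ 0) :
    padicValRat r (x * y : ℤ) = padicValRat r x + padicValRat r y := by
  push_cast
  exact padicValRat.mul (by exact_mod_cast hx) (by exact_mod_cast hy)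

lemma val_pow (r : ℕ) [Fact r.Prime] {x : ℤ} (n : ℕ) :
    padicValRat r (x ^ n : ℤ) = n * padicValRat r x := by
  push_cast
  exact padicValRat.pow (p := r) _

lemma val_nonneg (r : ℕ) (x : ℤ) : 0 ≤ padicValRat r x := by
  rw [padicValRat.of_int]
  positivity

lemma val_of_not_dvd (r : ℕ) {x : ℤ} (h : ¬ (r : ℤ) ∣ x) : padicValRat r x = 0 := by
  rw [padicValRat.of_int, padicValInt.eq_zero_of_not_dvd h]
  rfl

lemma val_le_of_dvd (r : ℕ) [Fact r.Prime] {x y : ℤ} (hy : y ≠ 0) (h : x ∣ y) :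
    padicValRat r x ≤ padicValRat r y := by
  obtain ⟨c, rfl⟩ := h
  rw [val_mul r (left_ne_zero_of_mul hy) (right_ne_zero_of_mul hy)]
  linarith [val_nonneg r c]

/-- At an odd prime `r` not dividing `b`, the valuation of `X2` is even. With `α` and `k` the
valuations of `a` and `X`, it equals `min (4k) (4α) - 2k` when `0 < k < 2α` and `k ≠ α`, it is
squeezed to `2α` when `0 < k = α`, and it vanishes when `k = 0` or `k = 2α`. -/
lemma even_val_odd_prime (r : ℕ) [Fact r.Prime] (hr2 : r ≠ 2) {a b X Y Z X2 : ℤ}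
    (ha : a ≠ 0) (hb : b ≠ 0) (hX : X ≠ 0) (hX2 : X2 ≠ 0) (hrb : ¬ (r : ℤ) ∣ b)
    (hY : X ^ 2 + a ^ 4 = Y ^ 2) (hZ : X ^ 2 + b ^ 4 = Z ^ 2)
    (hdbl : 2 * X * Y * Z * X2 = X ^ 4 - a ^ 4 * b ^ 4)
    (hXd : X ∣ a ^ 2 * b ^ 2) (hX2d : X2 ∣ a ^ 2 * b ^ 2) : Even (padicValRat r X2) := by
  have hY0 : Y ≠ 0 := by
    rintro rfl
    have : 0 < X ^ 2 := by positivity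
    nlinarith [sq_nonneg (a ^ 2)]
  have hZ0 : Z ≠ 0 := by
    rintro rfl
    have : 0 < X ^ 2 := by positivity
    nlinarith [sq_nonneg (b ^ 2)]
  have v2 : padicValRat r (2 : ℤ) = 0 := by
    apply val_of_not_dvd
    intro h
    exact hr2 ((Nat.prime_dvd_prime_iff_eq Fact.out Nat.prime_two).mp (by exact_mod_cast h))
  have vb : padicValRat r b = 0 := val_of_not_dvd r hrb
  have hab : a ^ 2 * b ^ 2 ≠ 0 := by positivity
  have h1 := val_add r (pow_ne_zero 2 hX) (pow_ne_zero 4 ha) (hY ▸ pow_ne_zero 2 hY0)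
  have h2 := val_add r (pow_ne_zero 2 hX) (pow_ne_zero 4 hb) (hZ ▸ pow_ne_zero 2 hZ0)
  have hprod : 2 * X * Y * Z * X2 ≠ 0 := by positivity
  have h3 := val_add r (x := X ^ 4) (y := -(a ^ 4 * b ^ 4)) (pow_ne_zero 4 hX)
    (neg_ne_zero.mpr (by positivity)) (by rw [← sub_eq_add_neg, ← hdbl]; exact hprod)
  rw [← sub_eq_add_neg, ← hdbl] at h3
  have h4 := val_le_of_dvd r hab hXd
  have h5 := val_le_of_dvd r hab hX2d
  rw [hY] at h1
  rw [hZ] at h2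
  have e3 : padicValRat r (-(a ^ 4 * b ^ 4) : ℤ) = 4 * padicValRat r a := by
    rw [Int.cast_neg, padicValRat.neg, val_mul r (pow_ne_zero 4 ha) (pow_ne_zero 4 hb),
      val_pow, val_pow, vb]
    norm_num
  have e4 : padicValRat r (2 * X * Y * Z * X2 : ℤ) = padicValRat r X + padicValRat r Y
      + padicValRat r Z + padicValRat r X2 := by
    rw [val_mul r (by positivity) hX2, val_mul r (by positivity) hZ0,
      val_mul r (by positivity) hY0, val_mul r two_ne_zero hX, v2, zero_add]
  rw [e3, e4] at h3
  rw [val_mul r (pow_ne_zero 2 ha) (pow_ne_zero 2 hb)] at h4 h5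
  simp only [val_pow, vb] at h1 h2 h3 h4 h5
  have n1 := val_nonneg r X
  have n2 := val_nonneg r X2
  have n3 := val_nonneg r Y
  have n4 := val_nonneg r Z
  have n5 := val_nonneg r a
  rw [Int.even_iff]
  push_cast at h1 h2 h3 h4 h5
  omega

/-- The `2`-adic valuation of `X2` is odd. With `β` and `k` the valuations of `b` and `X`, the
constraints force `1 ≤ k < 2β` and `k ≠ β`, and the valuation is `min (4k) (4β) - 2k - 1`. -/
lemma odd_val_two {a b X Y Z X2 : ℤ}
    (ha : a % 2 = 1) (hb : b ≠ 0) (hX : X ≠ 0) (hX2 : X2 ≠ 0)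
    (hY : X ^ 2 + a ^ 4 = Y ^ 2) (hZ : X ^ 2 + b ^ 4 = Z ^ 2)
    (hdbl : 2 * X * Y * Z * X2 = X ^ 4 - a ^ 4 * b ^ 4)
    (hXd : X ∣ a ^ 2 * b ^ 2) (hX2d : X2 ∣ a ^ 2 * b ^ 2) : Odd (padicValRat 2 X2) := by
  have ha0 : a ≠ 0 := by rintro rfl; simp at ha
  have hY0 : Y ≠ 0 := by
    rintro rfl
    have : 0 < X ^ 2 := by positivity
    nlinarith [sq_nonneg (a ^ 2)]
  have hZ0 : Z ≠ 0 := by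
    rintro rfl
    have : 0 < X ^ 2 := by positivity
    nlinarith [sq_nonneg (b ^ 2)]
  have sq4 : ∀ t : ℤ, t % 2 = 1 → ∃ c, t ^ 2 = 4 * c + 1 := fun t ht ↦ by
    obtain ⟨k, rfl⟩ : ∃ k, t = 2 * k + 1 := ⟨t / 2, by omega⟩
    exact ⟨k ^ 2 + k, by ring⟩
  have sq4' : ∀ t : ℤ, t ^ 2 % 4 = 0 ∨ t ^ 2 % 4 = 1 := fun t ↦ by
    rcases Int.emod_two_eq_zero_or_one t with h | h
    · obtain ⟨k, rfl⟩ : ∃ k, t = 2 * k := ⟨t / 2, by omega⟩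
      left; ring_nf; omega
    · obtain ⟨c, hc⟩ := sq4 t h
      omega
  have p4 : ∀ t : ℤ, t % 2 = 1 → ∃ c, t ^ 4 = 4 * c + 1 := fun t ht ↦ by
    obtain ⟨c, hc⟩ := sq4 t ht
    exact ⟨4 * c ^ 2 + 2 * c, by linear_combination (t ^ 2 + 4 * c + 1) * hc⟩
  have notdvd : ∀ t : ℤ, t % 2 = 1 → padicValRat 2 t = 0 := fun t ht ↦
    val_of_not_dvd 2 (by push_cast; omega)
  have vtwo : padicValRat 2 (2 : ℤ) = 1 := by
    simpa using padicValRat.self (p := 2) one_lt_two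
  have dec : ∀ t : ℤ, t ≠ 0 → ∃ (k : ℕ) (u : ℤ), t = 2 ^ k * u ∧ u % 2 = 1 := fun t ht ↦ by
    have hfin : FiniteMultiplicity 2 t := Int.finiteMultiplicity_iff.mpr ⟨by decide, ht⟩
    obtain ⟨u, hu, hu2⟩ := hfin.exists_eq_pow_mul_and_not_dvd
    exact ⟨_, u, hu, by omega⟩
  have valdec : ∀ (k : ℕ) (u : ℤ), u % 2 = 1 → padicValRat 2 (2 ^ k * u : ℤ) = k := by
    intro k u hu
    rw [val_mul 2 (by positivity) (by rintro rfl; simp at hu), val_pow, vtwo, notdvd u hu]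
    ring
  obtain ⟨k, U, hXU, hU⟩ := dec X hX
  obtain ⟨β, B, hbB, hB⟩ := dec b hb
  have vX : padicValRat 2 X = k := by rw [hXU]; exact valdec k U hU
  have vb : padicValRat 2 b = β := by rw [hbB]; exact valdec β B hB
  have va : padicValRat 2 a = 0 := notdvd a ha
  have hk : 1 ≤ k := by
    by_contra h0
    obtain rfl : k = 0 := by omega
    obtain ⟨c, hc⟩ := sq4 U hU
    obtain ⟨d, hd⟩ := p4 a ha
    have := sq4' Y
    rw [← hY, hXU, pow_zero, one_mul, hc, hd] at this
    omega
  have hprod : 2 * X * Y * Z * X2 ≠ 0 := by positivity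
  have hab : a ^ 2 * b ^ 2 ≠ 0 := by positivity
  have h1 := val_add 2 (pow_ne_zero 2 hX) (pow_ne_zero 4 ha0) (hY ▸ pow_ne_zero 2 hY0)
  have h2 := val_add 2 (pow_ne_zero 2 hX) (pow_ne_zero 4 hb) (hZ ▸ pow_ne_zero 2 hZ0)
  have h3 := val_add 2 (x := X ^ 4) (y := -(a ^ 4 * b ^ 4)) (pow_ne_zero 4 hX)
    (neg_ne_zero.mpr (by positivity)) (by rw [← sub_eq_add_neg, ← hdbl]; exact hprod)
  rw [← sub_eq_add_neg, ← hdbl] at h3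
  have h4 := val_le_of_dvd 2 hab hXd
  have h5 := val_le_of_dvd 2 hab hX2d
  rw [hY] at h1
  rw [hZ] at h2
  have e3 : padicValRat 2 (-(a ^ 4 * b ^ 4) : ℤ) = 4 * β := by
    rw [Int.cast_neg, padicValRat.neg, val_mul 2 (pow_ne_zero 4 ha0) (pow_ne_zero 4 hb),
      val_pow, val_pow, vb, va]
    norm_num
  have e4 : padicValRat 2 (2 * X * Y * Z * X2 : ℤ) = 1 + k + padicValRat 2 Y
      + padicValRat 2 Z + padicValRat 2 X2 := by
    rw [val_mul 2 (by positivity) hX2, val_mul 2 (by positivity) hZ0,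
      val_mul 2 (by positivity) hY0, val_mul 2 two_ne_zero hX, vtwo, vX]
  -- equal valuations of `X²` and `b⁴` would make `Z²` twice an odd number times a power of `4`
  have h6 : k ≠ 2 * β := by
    rintro rfl
    obtain ⟨c, hc⟩ := sq4 U hU
    obtain ⟨d, hd⟩ := p4 B hB
    have hZ' : Z ^ 2 = 2 ^ (4 * β + 1) * (2 * (c + d) + 1) := by
      rw [← hZ, hXU, hbB, mul_pow, mul_pow, hc, hd]; ring
    have := congrArg (fun t : ℤ ↦ padicValRat 2 (t : ℚ)) hZ'
    beta_reduce at this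
    rw [valdec _ _ (by omega), val_pow] at this
    push_cast at this
    omega
  -- for `k = β` the two terms of `X⁴ - a⁴b⁴` cancel to a further factor `4`
  have h7 : k = β → (4 * β + 2 : ℤ) ≤ padicValRat 2 (2 * X * Y * Z * X2 : ℤ) := by
    rintro rfl
    obtain ⟨c, hc⟩ := p4 U hU
    obtain ⟨d, hd⟩ := p4 (a * B) (by rw [Int.mul_emod, ha, hB]; rfl)
    have e : 2 * X * Y * Z * X2 = 2 ^ (4 * k + 2) * (c - d) := by
      have : 2 * X * Y * Z * X2 = 2 ^ (4 * k) * (U ^ 4 - (a * B) ^ 4) := by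
        rw [hdbl, hXU, hbB]; ring
      rw [this, hc, hd]; ring
    have hle := val_le_of_dvd 2 hprod ⟨c - d, e⟩
    rw [val_pow, vtwo] at hle
    push_cast at hle ⊢
    linarith
  rw [e4] at h3 h7
  rw [e3] at h3
  rw [val_mul 2 (pow_ne_zero 2 ha0) (pow_ne_zero 2 hb)] at h4 h5
  simp only [val_pow, vb, va, vX] at h1 h2 h3 h4 h5
  have n2 := val_nonneg 2 X2
  have n3 := val_nonneg 2 Y
  have n4 := val_nonneg 2 Z
  rw [Int.odd_iff]
  push_cast at h1 h2 h3 h4 h5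
  omega

/-! ### From the cuboid to the descent -/

lemma int_of_sq {X : ℚ} {n : ℤ} (h : X ^ 2 = n) : ∃ m : ℤ, X = m := by
  obtain ⟨m, hm⟩ := Rat.isSquare_intCast_iff.mp ⟨X, by rw [← h, pow_two]⟩
  have : X ^ 2 = (m : ℚ) ^ 2 := by rw [h, hm]; push_cast; ring
  rcases sq_eq_sq_iff_eq_or_eq_neg.mp this with h | h
  · exact ⟨m, h⟩
  · exact ⟨-m, by simpa using h⟩

/-- When the curve `y² = x(x + a⁴)(x + b⁴)` has finitely many rational points, a point `x = X²` for
which `x + a⁴ = Y²` and `x + b⁴ = Z²` has integral `X`, `Y`, `Z`. Applying integrality also to the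
translate of the point by `(0, 0)` bounds `X` by a divisibility. -/
lemma integral_triple {a b : ℤ}
    (hfin : {P : ℚ × ℚ | P.2 ^ 2 = P.1 ^ 3 + (a ^ 4 + b ^ 4 : ℤ) * P.1 ^ 2
      + (a ^ 4 * b ^ 4 : ℤ) * P.1}.Finite) {X Y Z : ℚ} (hX : X ≠ 0)
    (hY : X ^ 2 + a ^ 4 = Y ^ 2) (hZ : X ^ 2 + b ^ 4 = Z ^ 2) :
    ∃ X' Y' Z' : ℤ, X = X' ∧ Y = Y' ∧ Z = Z' ∧ X' ∣ a ^ 2 * b ^ 2 := by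
  obtain ⟨n, hn⟩ := integral_of_finite _ _ hfin (x := X ^ 2) (y := X * Y * Z) (by
    push_cast
    rw [mul_pow, mul_pow, ← hY, ← hZ]; ring)
  -- translation by the 2-torsion point `(0, 0)`
  obtain ⟨k, hk⟩ := integral_of_finite _ _ hfin (x := a ^ 4 * b ^ 4 / X ^ 2)
    (y := a ^ 4 * b ^ 4 * Y * Z / X ^ 3) (by
    push_cast
    rw [div_pow, mul_pow, mul_pow _ Y, ← hY, ← hZ]; field_simp; ring)
  obtain ⟨x, rfl⟩ := int_of_sq hn
  obtain ⟨y, rfl⟩ := int_of_sq (n := x ^ 2 + a ^ 4) (by rw [← hY]; push_cast; ring)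
  obtain ⟨z, rfl⟩ := int_of_sq (n := x ^ 2 + b ^ 4) (by rw [← hZ]; push_cast; ring)
  refine ⟨x, y, z, rfl, rfl, rfl, ?_⟩
  rw [← Int.pow_dvd_pow_iff two_ne_zero]
  refine ⟨k, ?_⟩
  field_simp at hk
  have : (a ^ 4 * b ^ 4 : ℤ) = x ^ 2 * k := by exact_mod_cast hk
  linear_combination this

/-- For finitely many rational points, `X² + a⁴` and `X² + b⁴` are not both squares, apart from the
degenerate `X = 0` and `X = ± ab` (points of order two and four). Doubling the point gives a
triple whose first entry is `±2 D²`, so `a⁴ + 4 D⁴` would be a square. -/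
lemma no_triple {a b : ℤ} (ha : a % 2 = 1) (hb : b ≠ 0) (hab : IsCoprime a b)
    (hfin : {P : ℚ × ℚ | P.2 ^ 2 = P.1 ^ 3 + (a ^ 4 + b ^ 4 : ℤ) * P.1 ^ 2
      + (a ^ 4 * b ^ 4 : ℤ) * P.1}.Finite) {X Y Z : ℚ} (hX : X ≠ 0)
    (hXab : X ^ 2 ≠ a ^ 2 * b ^ 2)
    (hY : X ^ 2 + a ^ 4 = Y ^ 2) (hZ : X ^ 2 + b ^ 4 = Z ^ 2) : False := by
  have ha0 : a ≠ 0 := by rintro rfl; simp at ha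
  have hX2pos : 0 < X ^ 2 := by positivity
  have hY0 : Y ≠ 0 := by
    rintro rfl
    nlinarith [sq_nonneg ((a : ℚ) ^ 2)]
  have hZ0 : Z ≠ 0 := by
    rintro rfl
    nlinarith [sq_nonneg ((b : ℚ) ^ 2)]
  have hnum : X ^ 4 - a ^ 4 * b ^ 4 ≠ 0 := by
    have hf : X ^ 4 - a ^ 4 * b ^ 4 = (X ^ 2 - a ^ 2 * b ^ 2) * (X ^ 2 + a ^ 2 * b ^ 2) := by ring
    rw [hf]
    exact mul_ne_zero (sub_ne_zero.mpr hXab) (by positivity)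
  obtain ⟨x, y, z, rfl, rfl, rfl, hxd⟩ := integral_triple hfin hX hY hZ
  have hY' : x ^ 2 + a ^ 4 = y ^ 2 := by exact_mod_cast hY
  have hZ' : x ^ 2 + b ^ 4 = z ^ 2 := by exact_mod_cast hZ
  -- the square roots of `x`, `x + a⁴`, `x + b⁴` at the doubled point
  obtain ⟨x2, y2, z2, hx2, hy2, -, hx2d⟩ := integral_triple hfin
    (X := (x ^ 4 - a ^ 4 * b ^ 4) / (2 * x * y * z))
    (Y := (x ^ 4 + 2 * a ^ 4 * x ^ 2 + a ^ 4 * b ^ 4) / (2 * x * y * z))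
    (Z := (x ^ 4 + 2 * b ^ 4 * x ^ 2 + a ^ 4 * b ^ 4) / (2 * x * y * z))
    (div_ne_zero hnum (by positivity))
    (by
      rw [div_pow, div_pow, mul_pow _ (z : ℚ), mul_pow _ (y : ℚ), ← hY, ← hZ]
      have h1 : (x : ℚ) ^ 2 + a ^ 4 ≠ 0 := by positivity
      have h2 : (x : ℚ) ^ 2 + b ^ 4 ≠ 0 := by positivity
      field_simp
      ring)
    (by
      rw [div_pow, div_pow, mul_pow _ (z : ℚ), mul_pow _ (y : ℚ), ← hY, ← hZ]
      have h1 : (x : ℚ) ^ 2 + a ^ 4 ≠ 0 := by positivity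
      have h2 : (x : ℚ) ^ 2 + b ^ 4 ≠ 0 := by positivity
      field_simp
      ring)
  have hx0 : x ≠ 0 := by exact_mod_cast hX
  have hx20 : x2 ≠ 0 := by
    rintro rfl
    rw [Int.cast_zero] at hx2
    exact div_ne_zero hnum (by positivity) hx2
  have hdbl : 2 * x * y * z * x2 = x ^ 4 - a ^ 4 * b ^ 4 := by
    field_simp at hx2
    have : (x ^ 4 - a ^ 4 * b ^ 4 : ℤ) = 2 * x * y * z * x2 := by
      qify
      linear_combination hx2
    exact this.symm
  have hY2 : x2 ^ 2 + a ^ 4 = y2 ^ 2 := by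
    qify
    rw [← hx2, ← hy2, div_pow, div_pow, mul_pow _ (z : ℚ), mul_pow _ (y : ℚ), ← hY, ← hZ]
    have h1 : (x : ℚ) ^ 2 + a ^ 4 ≠ 0 := by positivity
    have h2 : (x : ℚ) ^ 2 + b ^ 4 ≠ 0 := by positivity
    field_simp
    ring
  have hsq : IsSquare (2 * x2).natAbs := by
    refine isSquare_of_even_val (by omega) fun r hr ↦ ?_
    have : Fact r.Prime := ⟨hr⟩
    have key : Even (padicValRat r (2 * x2 : ℤ)) := by
      rw [val_mul r two_ne_zero hx20]
      by_cases hr2 : r = 2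
      · subst hr2
        have h1 : padicValRat 2 (2 : ℤ) = 1 := by
          simpa using padicValRat.self (p := 2) one_lt_two
        rw [h1]
        exact odd_one.add_odd (odd_val_two ha hb hx0 hx20 hY' hZ' hdbl hxd hx2d)
      · have h2 : padicValRat r (2 : ℤ) = 0 := by
          apply val_of_not_dvd
          intro h
          exact hr2 ((Nat.prime_dvd_prime_iff_eq hr Nat.prime_two).mp (by exact_mod_cast h))
        rw [h2, zero_add]
        by_cases hrb : (r : ℤ) ∣ b
        · have hra : ¬ (r : ℤ) ∣ a := fun hra ↦
            (Nat.prime_iff_prime_int.mp hr).not_isUnit (hab.isUnit_of_dvd' hra hrb)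
          exact even_val_odd_prime r hr2 hb ha0 hx0 hx20 hra hZ' hY'
            (by linear_combination hdbl) (by rwa [mul_comm]) (by rwa [mul_comm])
        · exact even_val_odd_prime r hr2 ha0 hb hx0 hx20 hrb hY' hZ' hdbl hxd hx2d
    rw [padicValRat.of_int] at key
    exact_mod_cast key
  obtain ⟨d, hd⟩ := hsq
  have hd4 : 4 * x2 ^ 2 = (d : ℤ) ^ 4 := by
    have h1 : ((2 * x2).natAbs : ℤ) ^ 2 = (2 * x2) ^ 2 := Int.natAbs_sq _
    rw [hd] at h1
    push_cast at h1
    linear_combination -h1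
  have hdev : (d : ℤ) % 2 = 0 := by
    rcases Int.emod_two_eq_zero_or_one (d : ℤ) with h | h
    · exact h
    · obtain ⟨c, hc⟩ : ∃ c, (d : ℤ) = 2 * c + 1 := ⟨d / 2, by omega⟩
      exfalso
      rw [hc] at hd4
      ring_nf at hd4
      omega
  obtain ⟨D, hD⟩ : ∃ D, (d : ℤ) = 2 * D := ⟨d / 2, by omega⟩
  rw [hD] at hd4
  refine fermat_descent _ a D y2 le_rfl ha ?_ ?_
  · rintro rfl
    simp at hd4
    exact hx20 hd4
  · rw [← hY2]
    linarith

/-- If EF2 has only finitely many rational points, then there is no F-BPC (and in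
particular no perfect cuboid, the case `M = 1`) whose Pythagorean face has aspect ratio
`(p²−q²) : 2pq`. -/
theorem no_FBPC_with_face_ratio
    (p q : ℤ) (hq : 0 < q) (hqp : q < p) (hcop : IsCoprime p q) (hpar : p % 2 ≠ q % 2)
    (h : (EF2 p q).Finite) :
    ¬ ∃ (u v W M : ℤ), 0 < u ∧ 0 < v ∧ 0 < W ∧ 0 < M ∧ Squarefree M ∧
      u * (2 * p * q) = v * (p ^ 2 - q ^ 2) ∧ IsSquare (u ^ 2 + v ^ 2) ∧
      IsSquare W ∧ IsSquare (M * u ^ 2 + W) ∧ IsSquare (M * v ^ 2 + W) ∧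
      IsSquare (M * (u ^ 2 + v ^ 2) + W) := by
  rintro ⟨u, v, W, M, hu, hv, hW, hM, -, huv, -, ⟨w, hw⟩, ⟨f, hf⟩, ⟨g, hg⟩, ⟨k, hk⟩⟩
  have hp : 0 < p := hq.trans hqp
  have hpp : (p ^ 2 - q ^ 2) % 2 = 1 := by
    have e : p ^ 2 - q ^ 2 = (p - q) * (p + q) := by ring
    have h1 : (p - q) % 2 = 1 := by omega
    have h2 : (p + q) % 2 = 1 := by omega
    rw [e, Int.mul_emod, h1, h2]; rfl
  have hapos : 0 < p ^ 2 - q ^ 2 := by nlinarith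
  have hbpos : 0 < 2 * p * q := by positivity
  have hcopr : IsCoprime (p ^ 2 - q ^ 2) (2 * p * q) := by
    have h2 : IsCoprime (p ^ 2 - q ^ 2) 2 :=
      ⟨1, -((p ^ 2 - q ^ 2) / 2), by omega⟩
    have h3 : IsCoprime (p ^ 2 - q ^ 2) p := by
      have : IsCoprime (-q ^ 2 + p * p) p :=
        IsCoprime.add_mul_left_left (hcop.symm.pow_left.neg_left) p
      convert this using 1; ring
    have h4 : IsCoprime (p ^ 2 - q ^ 2) q := by
      have : IsCoprime (p ^ 2 + q * (-q)) q :=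
        IsCoprime.add_mul_left_left (hcop.pow_left) (-q)
      convert this using 1; ring
    exact (h2.mul_right h3).mul_right h4
  have hset : EF2 p q = {P : ℚ × ℚ | P.2 ^ 2 = P.1 ^ 3 +
      ((p ^ 2 - q ^ 2) ^ 4 + (2 * p * q) ^ 4 : ℤ) * P.1 ^ 2
      + ((p ^ 2 - q ^ 2) ^ 4 * (2 * p * q) ^ 4 : ℤ) * P.1} := by
    ext P
    simp only [EF2, Set.mem_ofPred_eq]
    push_cast
    ring_nf
  rw [hset] at h
  obtain ⟨a, ha⟩ : ∃ a, a = p ^ 2 - q ^ 2 := ⟨_, rfl⟩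
  obtain ⟨b, hb⟩ : ∃ b, b = 2 * p * q := ⟨_, rfl⟩
  have hc : (p ^ 2 + q ^ 2) ^ 2 = a ^ 2 + b ^ 2 := by rw [ha, hb]; ring
  obtain ⟨c, hcdef⟩ : ∃ c, c = p ^ 2 + q ^ 2 := ⟨_, rfl⟩
  rw [← hcdef] at hc
  rw [← ha, ← hb] at h hcopr huv
  rw [← ha] at hapos hpp
  rw [← hb] at hbpos
  have hw0 : w ≠ 0 := by rintro rfl; simp at hw; omega
  have hk2 : w ^ 2 < k ^ 2 := by nlinarith [mul_pos hM (by positivity : 0 < u ^ 2 + v ^ 2)]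
  have hk0 : k ≠ 0 := by
    rintro rfl
    nlinarith [sq_nonneg w]
  have hwQ : (w : ℚ) ≠ 0 := by exact_mod_cast hw0
  -- the cuboid as a rational point `x = X²` at which `x`, `x + a⁴` and `x + b⁴` are all squares
  refine no_triple hpp hbpos.ne' hcopr h (X := a * b * k / w) (Y := a * c * g / w)
    (Z := b * c * f / w) ?_ ?_ ?_ ?_
  · have : (a : ℚ) ≠ 0 := by exact_mod_cast hapos.ne'
    have : (b : ℚ) ≠ 0 := by exact_mod_cast hbpos.ne'
    have : (k : ℚ) ≠ 0 := by exact_mod_cast hk0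
    positivity
  · intro heq
    field_simp at heq
    exact hk2.ne' (by exact_mod_cast heq)
  · have : a ^ 2 * b ^ 2 * k ^ 2 + a ^ 4 * w ^ 2 = a ^ 2 * c ^ 2 * g ^ 2 := by
      rw [hc]
      have e1 : w ^ 2 = W := by rw [hw]; ring
      have e2 : g ^ 2 = M * v ^ 2 + W := by rw [hg]; ring
      have e3 : k ^ 2 = M * (u ^ 2 + v ^ 2) + W := by rw [hk]; ring
      rw [e1, e2, e3]
      linear_combination a ^ 2 * M * (u * b + v * a) * huv
    qify at this
    rw [div_pow, div_pow, div_add' _ _ _ (pow_ne_zero 2 hwQ)]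
    congr 1
    linear_combination this
  · have : a ^ 2 * b ^ 2 * k ^ 2 + b ^ 4 * w ^ 2 = b ^ 2 * c ^ 2 * f ^ 2 := by
      rw [hc]
      have e1 : w ^ 2 = W := by rw [hw]; ring
      have e2 : f ^ 2 = M * u ^ 2 + W := by rw [hf]; ring
      have e3 : k ^ 2 = M * (u ^ 2 + v ^ 2) + W := by rw [hk]; ring
      rw [e1, e2, e3]
      linear_combination -b ^ 2 * M * (u * b + v * a) * huv
    qify at this
    rw [div_pow, div_pow, div_add' _ _ _ (pow_ne_zero 2 hwQ)]
    congr 1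
    linear_combination this
end

section
/- Theorem 2: For any admissible pair (p,q) satisfying either p⁴−q⁴ > 4p³q or p⁴−q⁴ < 4pq³, there exists an edge cuboid whose integer edges are in the ratio (p²−q²):2pq; that is, there exist positive integers a, b and a positive integer E that is not a perfect square such that a·2pq = b·(p²−q²) and a²+b², a²+E, b²+E, and a²+b²+E are all perfect squares. -/
/-!
Write `u = p² - q²`, `v = 2pq`, `w = p² + q²`, so `u² + v² = w²`. A rational `X` with `X + u²`,
`X + v²`, `X + w²` all squares is obtained by doubling the point `(0, uvw)` on the elliptic curve
`Y² = (X + u²)(X + v²)(X + w²)`. Clearing denominators with the factor `2uvw` gives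
`a = 2u²vw`, `b = 2uv²w`, `E = w⁸ - 6u²v²w⁴ + u⁴v⁴`.

*Positivity.* `E = (u²v² - w²(u+v)²)(u²v² - w²(u-v)²)`, and the two range hypotheses are
`uw > (u+w)v` and `uw < (w-u)v`; in either case both factors are negative.

*Not a square.* With `A = w⁴ - u²v²` and `B = 2uvw²` one has `E = A² - B²`, while
`A² + B² = (w⁴ + u²v²)²`. If `E` were a square, `A⁴ - B⁴ = C²` would be a nontrivial solution, whence
`C⁴ + 4(AB)⁴ = (A⁴ + B⁴)²`, contradicting Fermat's theorem that `x⁴ + 4y⁴ = z²` has no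
solution with `xy ≠ 0` (`four_descent`, by infinite descent on `|xy|`).
-/

/-- Coprime positive integers whose product is a square are both squares. -/
lemma squares_of_coprime_mul {m n c : ℤ} (hm : 0 < m) (hn : 0 < n) (h : Int.gcd m n = 1)
    (heq : m * n = c ^ 2) : ∃ k l : ℤ, m = k ^ 2 ∧ n = l ^ 2 := by
  obtain ⟨k, hk⟩ := Int.sq_of_gcd_eq_one h heq
  obtain ⟨l, hl⟩ := Int.sq_of_gcd_eq_one (by rwa [Int.gcd_comm]) (by rw [mul_comm]; exact heq)
  refine ⟨k, l, ?_, ?_⟩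
  · rcases hk with hk | hk
    · exact hk
    · nlinarith [sq_nonneg k]
  · rcases hl with hl | hl
    · exact hl
    · nlinarith [sq_nonneg l]

/-- If `l² = 2rs` with `r`, `s` coprime and `r` even, then `r = 2e²` and `s = f²`. -/
lemma split_even {r s l : ℤ} (hr : 0 < r) (hs : 0 < s) (h : Int.gcd r s = 1)
    (hl : l ^ 2 = 2 * r * s) (he : r % 2 = 0) :
    ∃ e f : ℤ, r = 2 * e ^ 2 ∧ s = f ^ 2 := by
  obtain ⟨r', rfl⟩ : (2 : ℤ) ∣ r := Int.dvd_of_emod_eq_zero he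
  have h2 : (2 : ℤ) ∣ l := Int.prime_two.dvd_of_dvd_pow (n := 2) ⟨2 * r' * s, by rw [hl]; ring⟩
  obtain ⟨l', rfl⟩ := h2
  have hg : Int.gcd r' s = 1 := by
    rw [← Int.isCoprime_iff_gcd_eq_one] at h ⊢
    exact h.of_mul_left_right
  obtain ⟨e, f, he, hf⟩ := squares_of_coprime_mul (m := r') (n := s) (c := l') (by linarith) hs hg
    (by linarith)
  exact ⟨e, f, by rw [he], hf⟩

/-- The descent step for odd `x`: a primitive solution of `x⁴ + 4y⁴ = z²` with `x` odd yields a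
solution `(f, e)` with `2ef` a divisor of `y`. -/
lemma descent_odd {x y z : ℤ} (hx : x % 2 = 1) (hy : y ≠ 0) (hxy : IsCoprime x y)
    (h : x ^ 4 + 4 * y ^ 4 = z ^ 2) :
    ∃ e f k : ℤ, e ≠ 0 ∧ f ≠ 0 ∧ 2 * (f * e) ∣ y ∧ f ^ 4 + 4 * e ^ 4 = k ^ 2 := by
  have hx2 : x ^ 2 % 2 = 1 := by simp [pow_two, Int.mul_emod, hx]
  have hc2 : IsCoprime x 2 := ⟨1, -(x / 2), by omega⟩
  have hz0 : z ≠ 0 := by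
    rintro rfl
    have : 0 < y ^ 4 := by positivity
    nlinarith [sq_nonneg (x ^ 2)]
  have ht : PythagoreanTriple (x ^ 2) (2 * y ^ 2) |z| := by
    unfold PythagoreanTriple
    rw [abs_mul_abs_self]
    linear_combination h
  obtain ⟨m, n, h1, h2, -, hmn, -, hm0⟩ := ht.coprime_classification'
    (Int.isCoprime_iff_gcd_eq_one.1 ((hc2.mul_right hxy.pow_right).pow_left)) hx2 (abs_pos.2 hz0)
  have hy2 : 0 < y ^ 2 := by positivity
  have hmy : m * n = y ^ 2 := by linarith
  have hm : 0 < m := lt_of_le_of_ne hm0 (by rintro rfl; linarith)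
  have hn : 0 < n := by
    by_contra hcon
    nlinarith
  obtain ⟨k, l, rfl, rfl⟩ := squares_of_coprime_mul hm hn hmn hmy
  have hk0 : k ≠ 0 := by rintro rfl; simp at hm
  have hl0 : l ≠ 0 := by rintro rfl; simp at hn
  have hkl : IsCoprime (k ^ 2) (l ^ 2) := Int.isCoprime_iff_gcd_eq_one.2 hmn
  -- `x² + l⁴ = k⁴` is again a primitive Pythagorean triple.
  have ht2 : PythagoreanTriple x (l ^ 2) (k ^ 2) := by
    unfold PythagoreanTriple
    linear_combination h1
  have hxl : IsCoprime x (l ^ 2) := by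
    have h3 : IsCoprime (x ^ 2) (l ^ 2) := by
      have h4 : IsCoprime ((k ^ 2) ^ 2 + l ^ 2 * (-l ^ 2)) (l ^ 2) :=
        (IsCoprime.add_mul_left_left_iff).2 hkl.pow_left
      have h5 : x ^ 2 = (k ^ 2) ^ 2 + l ^ 2 * (-l ^ 2) := by rw [h1]; ring
      rwa [h5]
    exact (IsCoprime.pow_left_iff (by norm_num)).1 h3
  obtain ⟨r, s, -, hl2, hk2, hrs, hpar, hr0⟩ := ht2.coprime_classification'
    (Int.isCoprime_iff_gcd_eq_one.1 hxl) hx hm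
  have hr : 0 < r := lt_of_le_of_ne hr0 (by rintro rfl; simp at hl2; exact hl0 hl2)
  have hs : 0 < s := by
    by_contra hcon
    nlinarith
  have hef : ∃ e f : ℤ, e ≠ 0 ∧ f ≠ 0 ∧ l ^ 2 = (2 * (f * e)) ^ 2 ∧
      f ^ 4 + 4 * e ^ 4 = k ^ 2 := by
    rcases hpar with ⟨hp, -⟩ | ⟨-, hp⟩
    · obtain ⟨e, f, rfl, rfl⟩ := split_even hr hs hrs hl2 hp
      refine ⟨e, f, ?_, ?_, by rw [hl2]; ring, by rw [hk2]; ring⟩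
      · rintro rfl; simp at hr
      · rintro rfl; simp at hs
    · obtain ⟨e, f, rfl, rfl⟩ := split_even hs hr (by rwa [Int.gcd_comm])
        (by rw [hl2]; ring) hp
      refine ⟨e, f, ?_, ?_, by rw [hl2]; ring, by rw [hk2]; ring⟩
      · rintro rfl; simp at hs
      · rintro rfl; simp at hr
  obtain ⟨e, f, he, hf, hle, hfin⟩ := hef
  refine ⟨e, f, k, he, hf, ?_, hfin⟩
  rw [← Int.pow_dvd_pow_iff (n := 2) (by norm_num), ← hle, ← hmy]
  exact Dvd.intro_left _ rfl

/-- Fermat: `x⁴ + 4y⁴ = z²` has no integer solution with `xy ≠ 0`. The infinite descent is on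
`|xy|`. -/
lemma four_descent (N : ℕ) : ∀ x y z : ℤ, x ≠ 0 → y ≠ 0 → (x * y).natAbs = N →
    x ^ 4 + 4 * y ^ 4 ≠ z ^ 2 := by
  induction N using Nat.strong_induction_on with
  | _ N ih =>
  intro x y z hx hy hN h
  by_cases hcop : IsCoprime x y
  · rcases Int.emod_two_eq_zero_or_one x with hx2 | hx2
    · -- For `x = 2x'`, also `z = 2z'`, and `(y, x')` is a smaller solution.
      obtain ⟨x', rfl⟩ : (2 : ℤ) ∣ x := Int.dvd_of_emod_eq_zero hx2
      have h2 : (2 : ℤ) ∣ z := Int.prime_two.dvd_of_dvd_pow (n := 2)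
        ⟨8 * x' ^ 4 + 2 * y ^ 4, by rw [← h]; ring⟩
      obtain ⟨z', rfl⟩ := h2
      have hx' : x' ≠ 0 := by rintro rfl; simp at hx
      refine ih (y * x').natAbs ?_ y x' z' hy hx' rfl (by linarith)
      have h3 : (2 * x' * y).natAbs = 2 * (y * x').natAbs := by
        rw [show 2 * x' * y = 2 * (y * x') by ring, Int.natAbs_mul]; rfl
      have h4 : 0 < (y * x').natAbs := Int.natAbs_pos.2 (mul_ne_zero hy hx')
      omega
    · obtain ⟨e, f, k, he, hf, hd, hk⟩ := descent_odd hx2 hy hcop h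
      refine ih (f * e).natAbs ?_ f e k hf he rfl hk
      have h4 : 0 < (f * e).natAbs := Int.natAbs_pos.2 (mul_ne_zero hf he)
      have h5 : (2 * (f * e)).natAbs ≤ (x * y).natAbs :=
        Nat.le_of_dvd (Int.natAbs_pos.2 (mul_ne_zero hx hy))
          (Int.natAbs_dvd_natAbs.2 (hd.mul_left x))
      have h6 : (2 * (f * e)).natAbs = 2 * (f * e).natAbs := by rw [Int.natAbs_mul]; rfl
      omega
  · -- A common prime `d` of `x` and `y` satisfies `d² ∣ z` and can be divided out.
    have hg : Int.gcd x y ≠ 1 := fun hh => hcop (Int.isCoprime_iff_gcd_eq_one.2 hh)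
    obtain ⟨d, hd, hdg⟩ := Nat.exists_prime_and_dvd hg
    obtain ⟨x', rfl⟩ : (d : ℤ) ∣ x := (Int.natCast_dvd_natCast.2 hdg).trans (Int.gcd_dvd_left ..)
    obtain ⟨y', rfl⟩ : (d : ℤ) ∣ y := (Int.natCast_dvd_natCast.2 hdg).trans (Int.gcd_dvd_right ..)
    have h2 : (d : ℤ) ^ 2 ∣ z := by
      rw [← Int.pow_dvd_pow_iff (n := 2) (by norm_num), ← h]
      exact ⟨x' ^ 4 + 4 * y' ^ 4, by ring⟩
    obtain ⟨z', rfl⟩ := h2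
    have hd0 : (d : ℤ) ≠ 0 := by exact_mod_cast hd.ne_zero
    have hx' : x' ≠ 0 := right_ne_zero_of_mul hx
    have hy' : y' ≠ 0 := right_ne_zero_of_mul hy
    refine ih (x' * y').natAbs ?_ x' y' z' hx' hy' rfl ?_
    · have h3 : (d * x' * (d * y')).natAbs = d * d * (x' * y').natAbs := by
        rw [show (d : ℤ) * x' * (d * y') = d * d * (x' * y') by ring, Int.natAbs_mul,
          Int.natAbs_mul, Int.natAbs_natCast]
      have h4 : 0 < (x' * y').natAbs := Int.natAbs_pos.2 (mul_ne_zero hx' hy')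
      have h5 := hd.two_le
      have h6 : 2 * 2 ≤ d * d := Nat.mul_le_mul h5 h5
      rw [← hN, h3]
      nlinarith
    · apply mul_left_cancel₀ (pow_ne_zero 4 hd0)
      linear_combination h

/-- The doubling construction: a right triangle `u² + v² = w²` gives an edge cuboid with integer
edges in the ratio `u : v` as soon as the resulting value of `E` is positive. -/
lemma cuboid_of_triangle {u v w : ℤ} (hu : 0 < u) (hv : 0 < v) (hw : 0 < w)
    (h : u ^ 2 + v ^ 2 = w ^ 2) (hE : 0 < w ^ 8 - 6 * u ^ 2 * v ^ 2 * w ^ 4 + u ^ 4 * v ^ 4) :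
    ∃ a b E : ℤ, 0 < a ∧ 0 < b ∧ 0 < E ∧ ¬ IsSquare E ∧ a * v = b * u ∧
      IsSquare (a ^ 2 + b ^ 2) ∧ IsSquare (a ^ 2 + E) ∧ IsSquare (b ^ 2 + E) ∧
      IsSquare (a ^ 2 + b ^ 2 + E) := by
  refine ⟨2 * u ^ 2 * v * w, 2 * u * v ^ 2 * w, _, by positivity, by positivity, hE, ?_, by ring,
    ⟨2 * u * v * w ^ 2, ?_⟩, ⟨u ^ 2 * v ^ 2 + u ^ 2 * w ^ 2 - v ^ 2 * w ^ 2, ?_⟩,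
    ⟨u ^ 2 * v ^ 2 + v ^ 2 * w ^ 2 - u ^ 2 * w ^ 2, ?_⟩,
    ⟨u ^ 2 * w ^ 2 + v ^ 2 * w ^ 2 - u ^ 2 * v ^ 2, ?_⟩⟩
  · rintro ⟨z, hz⟩
    have hz0 : z ≠ 0 := by rintro rfl; simp at hz; omega
    have hc : 0 < w ^ 4 + u ^ 2 * v ^ 2 := by positivity
    have hb : 0 < 2 * u * v * w ^ 2 := by positivity
    have ha : w ^ 4 - u ^ 2 * v ^ 2 ≠ 0 := by
      intro ha
      have : z * z + (2 * u * v * w ^ 2) ^ 2 = 0 := by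
        rw [← hz]
        linear_combination (w ^ 4 - u ^ 2 * v ^ 2) * ha
      nlinarith [mul_self_nonneg z]
    refine four_descent _ (z * (w ^ 4 + u ^ 2 * v ^ 2))
      ((w ^ 4 - u ^ 2 * v ^ 2) * (2 * u * v * w ^ 2))
      ((w ^ 4 - u ^ 2 * v ^ 2) ^ 4 + (2 * u * v * w ^ 2) ^ 4)
      (mul_ne_zero hz0 hc.ne') (mul_ne_zero ha hb.ne') rfl ?_
    have h4 : (z * (w ^ 4 + u ^ 2 * v ^ 2)) ^ 4
        = ((z * z) * (w ^ 4 + u ^ 2 * v ^ 2) ^ 2) ^ 2 := by ring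
    rw [h4, ← hz]
    ring
  all_goals
    have h2 : w ^ 4 = (u ^ 2 + v ^ 2) ^ 2 := by rw [h]; ring
    have h3 : w ^ 8 = (u ^ 2 + v ^ 2) ^ 4 := by rw [h]; ring
    ring_nf
    simp only [h2, h3, ← h]
    ring

/-- Theorem 2: for any admissible pair `(p,q)` with `p⁴−q⁴ > 4p³q` or `p⁴−q⁴ < 4pq³`,
there exists an edge cuboid whose integer edges are in the ratio `(p²−q²) : 2pq`. -/
theorem exists_edge_cuboid_with_edge_ratio
    (p q : ℤ) (hq : 0 < q) (hqp : q < p) (hcop : IsCoprime p q) (hpar : p % 2 ≠ q % 2)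
    (hrange : p ^ 4 - q ^ 4 > 4 * p ^ 3 * q ∨ p ^ 4 - q ^ 4 < 4 * p * q ^ 3) :
    ∃ a b E : ℤ, 0 < a ∧ 0 < b ∧ 0 < E ∧ ¬ IsSquare E ∧
      a * (2 * p * q) = b * (p ^ 2 - q ^ 2) ∧
      IsSquare (a ^ 2 + b ^ 2) ∧ IsSquare (a ^ 2 + E) ∧ IsSquare (b ^ 2 + E) ∧
      IsSquare (a ^ 2 + b ^ 2 + E) := by
  have hp : 0 < p := hq.trans hqp
  have hu : 0 < p ^ 2 - q ^ 2 := by nlinarith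
  have hv : 0 < 2 * p * q := by positivity
  have hw : 0 < p ^ 2 + q ^ 2 := by positivity
  have h : (p ^ 2 - q ^ 2) ^ 2 + (2 * p * q) ^ 2 = (p ^ 2 + q ^ 2) ^ 2 := by ring
  have hr : (p ^ 2 - q ^ 2) * (p ^ 2 + q ^ 2)
        > ((p ^ 2 - q ^ 2) + (p ^ 2 + q ^ 2)) * (2 * p * q) ∨
      (p ^ 2 - q ^ 2) * (p ^ 2 + q ^ 2)
        < ((p ^ 2 + q ^ 2) - (p ^ 2 - q ^ 2)) * (2 * p * q) := by
    rcases hrange with h1 | h1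
    · left; linarith
    · right; linarith
  refine cuboid_of_triangle hu hv hw h ?_
  generalize p ^ 2 - q ^ 2 = u at *
  generalize 2 * p * q = v at *
  generalize p ^ 2 + q ^ 2 = w at *
  have huv : 0 < u * v := mul_pos hu hv
  have huw : 0 < u * w := mul_pos hu hw
  have hvw : 0 < v * w := mul_pos hv hw
  have hfac : w ^ 8 - 6 * u ^ 2 * v ^ 2 * w ^ 4 + u ^ 4 * v ^ 4
      = ((u * w + v * w + u * v) * (u * w + v * w - u * v))
        * ((u * w - v * w - u * v) * (u * w - v * w + u * v)) := by
    have h2 : w ^ 4 = (u ^ 2 + v ^ 2) ^ 2 := by rw [h]; ring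
    have h3 : w ^ 8 = (u ^ 2 + v ^ 2) ^ 4 := by rw [h]; ring
    ring_nf
    simp only [h2, h3, ← h]
    ring
  rw [hfac]
  rcases hr with h1 | h1
  · exact mul_pos (mul_pos (by linarith) (by linarith)) (mul_pos (by linarith) (by linarith))
  · exact mul_pos (mul_pos (by linarith) (by linarith))
      (mul_pos_of_neg_of_neg (by linarith) (by linarith))
end
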